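/- arXiv:math/0609697 — 9 statements merged into one kernel-verified Lean document; each statement's English description precedes it below -/
import Mathlib

section
/- Let P = (V_0,…,V_{n−1}) be an ordinary cyclic polygon as in the setup, with central angles θ_0,…,θ_{n−1} and winding number w. Then P is convex if and only if one of the following four conditions holds: (I) w = 1 and θ_i > 0 for every i ∈ {0,…,n−1}; (II) w = −1 and θ_i < 0 for every i ∈ {0,…,n−1}; (III) w = 0 and there is exactly one index i ∈ {0,…,n−1} with θ_i < 0, while θ_j > 0 for all j ∈ {0,…,n−1} with j ≠ i; (IV) w = 0 and there is exactly one index i ∈ {0,…,n−1} with θ_i > 0, while θ_j < 0 for all j ∈ {0,…,n−1} with j ≠ i. -/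
/-!
Everything is read off from `orient`, the signed area of a triangle. On the unit circle it factors
as a product of three sines of half-angles (`orient_Vtx`), so it never vanishes on three distinct
points, and its sign tells in which cyclic order they occur.

The condition in the middle is that the vertices are met in counterclockwise order in a single
turn: the angles `σ` agree modulo `2π` with some `τ` increasing from `0` to `2π` (`IsLift`).
Mirror images (`-σ`) account for the clockwise case; the half-open condition on the central angles
is relaxed to `|θ_i| ≤ π`, which is invariant under reflection.

* Lifts and angles (`exists_lift_of_angles`, `angles_of_lift`). The gaps of `τ` lie in `(0, 2π)` and
  sum to `2π`, so `θ_i` is the gap, or the gap minus `2π` when the gap is at least `π`. Since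
  `n ≥ 3`, this happens at most once. If it never happens, `w = 1` and all `θ_i > 0`; otherwise
  `w = 0` and exactly one `θ_i` is negative.
* A lift gives convexity (`isConvex_of_orient`). All sorted triples have the same orientation, so
  each edge lies on a supporting line and hence on the frontier of the hull. Conversely a frontier
  point lies on a supporting line; that line contains at most two vertices, the point is in their
  hull, and if there are two they are adjacent, as a chord joining nonadjacent vertices has
  vertices strictly on both sides.
* Convexity gives a lift of `σ` or of `-σ` (`edge_side_of_convex`, `all_edges_same_side`,
  `exists_lift_of_orient`). The supporting line at the midpoint of an edge contains the edge, so all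
  vertices are on one side of it. Consecutive edges have the same side because they share the
  triangle `V_i V_{i+1} V_{i+2}`. Positivity of the fan triangles `V_i V_{i+1} V_0` then says that
  the angles reduced to `[0, 2π)` increase.
-/


open Real Set

/-- The vertex `V_i = (cos σ(i), sin σ(i))` on the unit circle. -/
noncomputable def Vtx (σ : ℕ → ℝ) (i : ℕ) : ℝ × ℝ := (Real.cos (σ i), Real.sin (σ i))

/-- The determinant `Δ_{a,b,c}`. -/
noncomputable def Det3 (σ : ℕ → ℝ) (a b c : ℕ) : ℝ :=
  Matrix.det !![1, Real.cos (σ a), Real.sin (σ a);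
                1, Real.cos (σ b), Real.sin (σ b);
                1, Real.cos (σ c), Real.sin (σ c)]

/-- `i ⊕ 1`: equals `i+1` for `i ≤ n-2` and `0` for `i = n-1`. -/
def oplus (n i : ℕ) : ℕ := if i + 1 < n then i + 1 else 0

/-- The polygon is ordinary: the vertices `V_0, …, V_{n-1}` are pairwise distinct. -/
def Ordinary (n : ℕ) (σ : ℕ → ℝ) : Prop :=
  ∀ i < n, ∀ j < n, Vtx σ i = Vtx σ j → i = j

/-- The polygon is convex: the union of its edges equals the topological boundary of the
convex hull of its vertex set. -/
def IsConvexPolygon (n : ℕ) (σ : ℕ → ℝ) : Prop :=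
  (⋃ i ∈ Finset.range n, segment ℝ (Vtx σ i) (Vtx σ (i + 1))) =
    frontier (convexHull ℝ {p | ∃ i < n, p = Vtx σ i})

/-- The points of `S` are strictly to one side of the segment `[P₀, P₁]`: the line through
the distinct points `P₀` and `P₁` is the boundary of an open half-plane containing `S`. -/
def StrictlyOneSide (P₀ P₁ : ℝ × ℝ) (S : Set (ℝ × ℝ)) : Prop :=
  P₀ ≠ P₁ ∧ ∃ a b c : ℝ, (a, b) ≠ (0, 0) ∧
    a * P₀.1 + b * P₀.2 = c ∧ a * P₁.1 + b * P₁.2 = c ∧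
    ∀ Q ∈ S, a * Q.1 + b * Q.2 > c

/-! ### Orientation of triangles on the circle -/

/-- Twice the signed area of the triangle `A B C`; positive for a counterclockwise triangle. -/
def orient (A B C : ℝ × ℝ) : ℝ :=
  (B.1 - A.1) * (C.2 - A.2) - (B.2 - A.2) * (C.1 - A.1)

/-- The orientation of a triangle inscribed in the unit circle, through half-angles. -/
lemma orient_Vtx (σ : ℕ → ℝ) (i j k : ℕ) :
    orient (Vtx σ i) (Vtx σ j) (Vtx σ k) =
      4 * Real.sin ((σ j - σ i) / 2) * Real.sin ((σ k - σ j) / 2) *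
        Real.sin ((σ k - σ i) / 2) := by
  obtain ⟨a, ha⟩ : ∃ a, σ i = 2 * a := ⟨σ i / 2, by ring⟩
  obtain ⟨b, hb⟩ : ∃ b, σ j = 2 * b := ⟨σ j / 2, by ring⟩
  obtain ⟨c, hc⟩ : ∃ c, σ k = 2 * c := ⟨σ k / 2, by ring⟩
  have h1 : (σ j - σ i) / 2 = b - a := by rw [ha, hb]; ring
  have h2 : (σ k - σ j) / 2 = c - b := by rw [hc, hb]; ring
  have h3 : (σ k - σ i) / 2 = c - a := by rw [hc, ha]; ring
  simp only [orient, Vtx]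
  rw [h1, h2, h3, ha, hb, hc]
  simp only [Real.sin_two_mul, Real.cos_two_mul', Real.sin_sub]
  have e1 := Real.sin_sq_add_cos_sq a
  have e2 := Real.sin_sq_add_cos_sq b
  have e3 := Real.sin_sq_add_cos_sq c
  generalize Real.sin a = sa at *
  generalize Real.sin b = sb at *
  generalize Real.sin c = sc at *
  generalize Real.cos a = ca at *
  generalize Real.cos b = cb at *
  generalize Real.cos c = cc at *
  grind

lemma Vtx_eq_of_sin {σ : ℕ → ℝ} {i j : ℕ} (h : Real.sin ((σ j - σ i) / 2) = 0) :
    Vtx σ i = Vtx σ j := by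
  obtain ⟨z, hz⟩ := Real.sin_eq_zero_iff.1 h
  have : σ j = σ i + z * (2 * π) := by linarith
  simp [Vtx, this]

/-- Three distinct points of the circle are not collinear. -/
lemma orient_ne_zero {σ : ℕ → ℝ} {i j k : ℕ} (hij : Vtx σ i ≠ Vtx σ j)
    (hjk : Vtx σ j ≠ Vtx σ k) (hik : Vtx σ i ≠ Vtx σ k) :
    orient (Vtx σ i) (Vtx σ j) (Vtx σ k) ≠ 0 := by
  rw [orient_Vtx]
  have h1 := mt Vtx_eq_of_sin hij
  have h2 := mt Vtx_eq_of_sin hjk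
  have h3 := mt Vtx_eq_of_sin hik
  positivity

lemma orient_neg (σ : ℕ → ℝ) (i j k : ℕ) :
    orient (Vtx (-σ) i) (Vtx (-σ) j) (Vtx (-σ) k) =
      - orient (Vtx σ i) (Vtx σ j) (Vtx σ k) := by
  simp [orient, Vtx]; ring

/-! ### Supporting lines of a convex hull in the plane -/

/-- The barycentric coordinates of `x` are ratios of orientations. -/
lemma triangle_mem {S : Set (ℝ × ℝ)} {A B C x : ℝ × ℝ} (hA : A ∈ S) (hB : B ∈ S) (hC : C ∈ S)
    (h1 : 0 < orient A B x) (h2 : 0 < orient B C x) (h3 : 0 < orient C A x) :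
    x ∈ convexHull ℝ S := by
  have hs : orient A B C = orient A B x + orient B C x + orient C A x := by
    simp only [orient]; ring
  have hpos : 0 < orient A B C := by linarith
  have hx : x = (orient B C x / orient A B C) • A + (orient C A x / orient A B C) • B
      + (orient A B x / orient A B C) • C := by
    ext <;> simp <;> field_simp <;> simp only [orient] <;> ring
  have hc := convex_convexHull ℝ S
  rw [hx]
  have := hc.sum_mem (t := (Finset.univ : Finset (Fin 3)))
    (w := ![orient B C x / orient A B C, orient C A x / orient A B C,
      orient A B x / orient A B C]) (z := ![A, B, C]) ?_ ?_ ?_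
  · simpa [Fin.sum_univ_three] using this
  · intro i _; fin_cases i <;> simp <;> positivity
  · simp [Fin.sum_univ_three]; field_simp; linarith
  · intro i _; fin_cases i <;> simp <;> apply subset_convexHull <;> assumption

lemma interior_hull_nonempty_of_pos {S : Set (ℝ × ℝ)} {A B C : ℝ × ℝ} (hA : A ∈ S) (hB : B ∈ S)
    (hC : C ∈ S) (h : 0 < orient A B C) : (interior (convexHull ℝ S)).Nonempty := by
  refine ⟨((A.1 + B.1 + C.1) / 3, (A.2 + B.2 + C.2) / 3), mem_interior.2
    ⟨{x | 0 < orient A B x} ∩ {x | 0 < orient B C x} ∩ {x | 0 < orient C A x}, ?_, ?_, ?_⟩⟩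
  · rintro x ⟨⟨h1, h2⟩, h3⟩
    exact triangle_mem hA hB hC h1 h2 h3
  · have hcont : ∀ P Q, Continuous (orient P Q) := fun P Q => by unfold orient; fun_prop
    exact ((isOpen_lt continuous_const (hcont _ _)).inter
      (isOpen_lt continuous_const (hcont _ _))).inter (isOpen_lt continuous_const (hcont _ _))
  · simp only [orient] at h
    refine ⟨⟨?_, ?_⟩, ?_⟩ <;> simp only [orient, mem_ofPred_eq] <;> linarith

lemma interior_hull_nonempty {S : Set (ℝ × ℝ)} {A B C : ℝ × ℝ} (hA : A ∈ S) (hB : B ∈ S)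
    (hC : C ∈ S) (h : orient A B C ≠ 0) : (interior (convexHull ℝ S)).Nonempty := by
  rcases h.lt_or_gt with h | h
  · refine interior_hull_nonempty_of_pos hB hA hC ?_
    simp only [orient] at h ⊢; linarith
  · exact interior_hull_nonempty_of_pos hA hB hC h

/-- A supporting line, given by its coefficients, at a non-interior point. Hahn–Banach separates
the point from the interior, whose closure contains the hull. -/
lemma exists_support {S : Set (ℝ × ℝ)} (hS : (interior (convexHull ℝ S)).Nonempty) {p : ℝ × ℝ}
    (hp : p ∉ interior (convexHull ℝ S)) :
    ∃ α β : ℝ, (α ≠ 0 ∨ β ≠ 0) ∧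
      ∀ x ∈ convexHull ℝ S, α * x.1 + β * x.2 ≤ α * p.1 + β * p.2 := by
  have hc := convex_convexHull ℝ S
  obtain ⟨f, hf⟩ := geometric_hahn_banach_open_point hc.interior isOpen_interior hp
  have hrep : ∀ x : ℝ × ℝ, f x = f (1, 0) * x.1 + f (0, 1) * x.2 := by
    intro x
    have : x = x.1 • ((1, 0) : ℝ × ℝ) + x.2 • ((0, 1) : ℝ × ℝ) := by ext <;> simp
    conv_lhs => rw [this]
    rw [map_add, map_smul, map_smul]; simp; ring
  refine ⟨f (1, 0), f (0, 1), ?_, ?_⟩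
  · obtain ⟨q, hq⟩ := hS
    have h := hf q hq
    rw [hrep q, hrep p] at h
    by_contra! h0
    simp [h0.1, h0.2] at h
  · intro x hx
    rw [← hrep, ← hrep]
    have hx' : x ∈ closure (interior (convexHull ℝ S)) := by
      rw [hc.closure_interior_eq_closure_of_nonempty_interior hS]
      exact subset_closure hx
    exact closure_minimal (fun y hy => (hf y hy).le)
      (isClosed_le f.continuous continuous_const) hx'

/-- A nonconstant affine function vanishing at two points `A ≠ B` is a nonzero multiple of
`orient A B`. -/
lemma support_eq_orient {A B : ℝ × ℝ} (hAB : A ≠ B) {α β : ℝ} (h0 : α ≠ 0 ∨ β ≠ 0)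
    (h : α * A.1 + β * A.2 = α * B.1 + β * B.2) :
    ∃ l : ℝ, l ≠ 0 ∧ ∀ x : ℝ × ℝ,
      α * x.1 + β * x.2 - (α * A.1 + β * A.2) = l * orient A B x := by
  obtain ⟨d, hd⟩ : ∃ d, d = (B.1 - A.1) ^ 2 + (B.2 - A.2) ^ 2 := ⟨_, rfl⟩
  have hd0 : d ≠ 0 := by
    intro h1
    apply hAB
    rw [h1] at hd
    have : B.1 - A.1 = 0 := by nlinarith [sq_nonneg (B.1 - A.1), sq_nonneg (B.2 - A.2)]
    have : B.2 - A.2 = 0 := by nlinarith [sq_nonneg (B.1 - A.1), sq_nonneg (B.2 - A.2)]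
    ext <;> linarith
  have hx : ∀ x : ℝ × ℝ, α * x.1 + β * x.2 - (α * A.1 + β * A.2) =
      ((β * (B.1 - A.1) - α * (B.2 - A.2)) / d) * orient A B x := by
    intro x
    field_simp
    rw [hd]
    simp only [orient]
    grind
  refine ⟨_, ?_, hx⟩
  intro hl
  rw [hl] at hx
  have e0 := hx (0, 0)
  have e1 := hx (1, 0)
  have e2 := hx (0, 1)
  simp at e0 e1 e2
  rcases h0 with h0 | h0 <;> apply h0 <;> linarith

/-- A point of the hull on a supporting line is in the hull of the generators on that line. -/
lemma mem_hull_face {S : Set (ℝ × ℝ)} {p : ℝ × ℝ} (hp : p ∈ convexHull ℝ S) {α β : ℝ}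
    (h : ∀ x ∈ S, α * x.1 + β * x.2 ≤ α * p.1 + β * p.2) :
    p ∈ convexHull ℝ {x ∈ S | α * x.1 + β * x.2 = α * p.1 + β * p.2} := by
  obtain ⟨c, hc⟩ : ∃ c, c = α * p.1 + β * p.2 := ⟨_, rfl⟩
  simp only [← hc] at h ⊢
  set F := convexHull ℝ {x ∈ S | α * x.1 + β * x.2 = c} with hF
  have hFc : Convex ℝ F := convex_convexHull _ _
  have hFe : ∀ x ∈ F, α * x.1 + β * x.2 = c := by
    have hcv : Convex ℝ {x : ℝ × ℝ | α * x.1 + β * x.2 = c} := by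
      intro x hx y hy a b _ _ hab
      simp only [mem_ofPred_eq, Prod.fst_add, Prod.snd_add, Prod.smul_fst, Prod.smul_snd,
        smul_eq_mul] at *
      linear_combination a * hx + b * hy + c * hab
    exact fun x hx => convexHull_min (fun y hy => hy.2) hcv hx
  -- Points strictly below the supporting line, together with the face, form a convex set.
  have hK : Convex ℝ ({x : ℝ × ℝ | α * x.1 + β * x.2 < c} ∪ F) := by
    intro x hx y hy a b ha hb hab
    have key : ∀ u v : ℝ × ℝ, ∀ s t : ℝ, α * u.1 + β * u.2 < c → α * v.1 + β * v.2 ≤ c →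
        0 < s → 0 ≤ t → s + t = 1 →
        α * (s • u + t • v).1 + β * (s • u + t • v).2 < c := by
      intro u v s t hu hv hs ht hst
      simp only [Prod.fst_add, Prod.snd_add, Prod.smul_fst, Prod.smul_snd, smul_eq_mul]
      have : c = s * c + t * c := by rw [← add_mul, hst, one_mul]
      nlinarith [mul_lt_mul_of_pos_left hu hs, mul_le_mul_of_nonneg_left hv ht]
    have hle : ∀ u ∈ ({x : ℝ × ℝ | α * x.1 + β * x.2 < c} ∪ F), α * u.1 + β * u.2 ≤ c := by
      rintro u (hu | hu)
      · exact le_of_lt hu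
      · exact (hFe u hu).le
    rcases ha.eq_or_lt with rfl | ha'
    · have : b = 1 := by linarith
      subst this; simpa using hy
    rcases hb.eq_or_lt with rfl | hb'
    · have : a = 1 := by linarith
      subst this; simpa using hx
    rcases hx with hx1 | hx1
    · exact Or.inl (key x y a b hx1 (hle y hy) ha' hb hab)
    rcases hy with hy1 | hy1
    · left
      rw [add_comm]
      exact key y x b a hy1 (hle x (Or.inr hx1)) hb' ha (by linarith)
    · exact Or.inr (hFc hx1 hy1 ha hb hab)
  have hsub : S ⊆ {x : ℝ × ℝ | α * x.1 + β * x.2 < c} ∪ F := by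
    intro x hx
    rcases (h x hx).lt_or_eq with h1 | h1
    · exact Or.inl h1
    · exact Or.inr (subset_convexHull _ _ ⟨hx, h1⟩)
  rcases convexHull_min hsub hK hp with h1 | h1
  · exact absurd hc.symm (ne_of_lt h1)
  · exact h1

lemma orient_comb (A B x y : ℝ × ℝ) (s t : ℝ) (hst : s + t = 1) :
    orient A B (s • x + t • y) = s * orient A B x + t * orient A B y := by
  obtain rfl : t = 1 - s := by linarith
  simp [orient]; ring

/-- If `S` lies on one side of the line `AB`, points of that line are not interior to the hull. -/
lemma not_mem_interior_of_support {S : Set (ℝ × ℝ)} {A B p : ℝ × ℝ} (hAB : A ≠ B) {e : ℝ}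
    (he : e ≠ 0) (h : ∀ x ∈ S, 0 ≤ e * orient A B x) (hp : orient A B p = 0) :
    p ∉ interior (convexHull ℝ S) := by
  have hh : ∀ x ∈ convexHull ℝ S, 0 ≤ e * orient A B x := by
    have hcv : Convex ℝ {x : ℝ × ℝ | 0 ≤ e * orient A B x} := by
      intro x hx y hy a b ha hb hab
      simp only [mem_ofPred_eq] at *
      rw [orient_comb _ _ _ _ _ _ hab]
      nlinarith [mul_nonneg ha hx, mul_nonneg hb hy]
    exact fun x hx => convexHull_min h hcv hx
  intro hpi
  -- Moving from `p` along the normal of the line `AB`, to the negative side.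
  have hcont : Continuous (fun t : ℝ => p + (t * e) • ((B.2 - A.2, -(B.1 - A.1)) : ℝ × ℝ)) := by
    fun_prop
  have hev : ∀ᶠ t in nhdsWithin (0 : ℝ) (Set.Ioi 0),
      p + (t * e) • ((B.2 - A.2, -(B.1 - A.1)) : ℝ × ℝ) ∈ interior (convexHull ℝ S) := by
    apply nhdsWithin_le_nhds
    exact hcont.continuousAt.eventually_mem (isOpen_interior.mem_nhds (by simpa using hpi))
  obtain ⟨t, ht, ht0⟩ := (hev.and self_mem_nhdsWithin).exists
  have h1 := hh _ (interior_subset ht)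
  have h2 : e * orient A B (p + (t * e) • ((B.2 - A.2, -(B.1 - A.1)) : ℝ × ℝ)) =
      - (t * e ^ 2 * ((B.1 - A.1) ^ 2 + (B.2 - A.2) ^ 2)) := by
    simp only [orient, Prod.fst_add, Prod.snd_add, Prod.smul_fst, Prod.smul_snd,
      smul_eq_mul] at hp ⊢
    linear_combination e * hp
  have hd : 0 < (B.1 - A.1) ^ 2 + (B.2 - A.2) ^ 2 := by
    by_contra! h3
    apply hAB
    have : B.1 - A.1 = 0 := by nlinarith [sq_nonneg (B.1 - A.1), sq_nonneg (B.2 - A.2)]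
    have : B.2 - A.2 = 0 := by nlinarith [sq_nonneg (B.1 - A.1), sq_nonneg (B.2 - A.2)]
    ext <;> linarith
  have ht0' : 0 < t := ht0
  have : 0 < t * e ^ 2 * ((B.1 - A.1) ^ 2 + (B.2 - A.2) ^ 2) := by positivity
  linarith

/-! ### Consistently oriented polygons are convex -/

lemma orient_rotate (A B C : ℝ × ℝ) : orient A B C = orient B C A := by
  simp only [orient]; ring

lemma orient_swap (A B C : ℝ × ℝ) : orient A B C = - orient A C B := by
  simp only [orient]; ring

lemma orient_segment {A B p : ℝ × ℝ} (hp : p ∈ segment ℝ A B) : orient A B p = 0 := by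
  obtain ⟨s, t, _, _, hst, rfl⟩ := hp
  rw [orient_comb _ _ _ _ _ _ hst]
  simp only [orient]; ring

/-- For a fixed edge `i, i + 1`, the orientation of sorted triples determines the side on which
every vertex lies; the closing edge `n - 1, n` is covered through `V_n = V_0`. -/
lemma edge_side {n : ℕ} {σ : ℕ → ℝ} {e : ℝ} (hclose : Vtx σ n = Vtx σ 0)
    (h : ∀ i j k, i < j → j < k → k < n → 0 < e * orient (Vtx σ i) (Vtx σ j) (Vtx σ k))
    {i k : ℕ} (hi : i < n) (hk : k < n) :
    0 ≤ e * orient (Vtx σ i) (Vtx σ (i + 1)) (Vtx σ k) := by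
  have hz : ∀ A B : ℝ × ℝ, orient A B A = 0 := fun A B => by simp only [orient]; ring
  have hz' : ∀ A B : ℝ × ℝ, orient A B B = 0 := fun A B => by simp only [orient]; ring
  by_cases hki : k = i
  · subst hki; rw [hz, mul_zero]
  rcases Nat.lt_or_ge (i + 1) n with hin | hin
  · rcases lt_trichotomy k i with h1 | h1 | h1
    · rw [← orient_rotate]; exact (h k i (i + 1) h1 (by omega) hin).le
    · exact absurd h1 hki
    · rcases Nat.lt_or_ge (i + 1) k with h2 | h2
      · exact (h i (i + 1) k (by omega) h2 hk).le
      · obtain rfl : k = i + 1 := by omega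
        rw [hz', mul_zero]
  · obtain rfl : i + 1 = n := by omega
    rw [hclose, orient_rotate]
    rcases Nat.eq_zero_or_pos k with rfl | h1
    · rw [show ∀ A B : ℝ × ℝ, orient A A B = 0 from fun A B => by simp only [orient]; ring,
        mul_zero]
    · exact (h 0 k i h1 (by omega) hi).le

/-- If all sorted triples have the same orientation, the polygon is convex: every edge lies on a
supporting line, and conversely a frontier point lies on the chord cut out by a supporting line,
which must join adjacent vertices. -/
lemma isConvex_of_orient {n : ℕ} (hn : 3 ≤ n) {σ : ℕ → ℝ} {e : ℝ}
    (hclose : Vtx σ n = Vtx σ 0) (hord : Ordinary n σ)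
    (h : ∀ i j k, i < j → j < k → k < n → 0 < e * orient (Vtx σ i) (Vtx σ j) (Vtx σ k)) :
    IsConvexPolygon n σ := by
  have hmem : ∀ i < n, Vtx σ i ∈ {p | ∃ i < n, p = Vtx σ i} := fun i hi => ⟨i, hi, rfl⟩
  have hmem' : ∀ i < n, Vtx σ (i + 1) ∈ {p | ∃ i < n, p = Vtx σ i} := by
    intro i hi
    rcases Nat.lt_or_ge (i + 1) n with hin | hin
    · exact hmem _ hin
    · obtain rfl : i + 1 = n := by omega
      rw [hclose]; exact hmem 0 (by omega)
  have hne : ∀ i < n, Vtx σ i ≠ Vtx σ (i + 1) := by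
    intro i hi heq
    rcases Nat.lt_or_ge (i + 1) n with hin | hin
    · have := hord _ hi _ hin heq; omega
    · obtain rfl : i + 1 = n := by omega
      rw [hclose] at heq
      have := hord _ hi 0 (by omega) heq; omega
  have h012 := h 0 1 2 (by omega) (by omega) (by omega)
  have he : e ≠ 0 := by rintro rfl; simp at h012
  have hint : (interior (convexHull ℝ {p | ∃ i < n, p = Vtx σ i})).Nonempty :=
    interior_hull_nonempty (hmem 0 (by omega)) (hmem 1 (by omega)) (hmem 2 (by omega))
      (right_ne_zero_of_mul h012.ne')
  have hclosed : IsClosed (convexHull ℝ {p | ∃ i < n, p = Vtx σ i}) := by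
    apply Set.Finite.isClosed_convexHull
    have : {p | ∃ i < n, p = Vtx σ i} = (Vtx σ) '' (Set.Iio n) := by
      ext p; simp [eq_comm]
    rw [this]
    exact (Set.finite_Iio n).image _
  unfold IsConvexPolygon
  rw [hclosed.frontier_eq]
  ext p
  simp only [Finset.mem_range, mem_iUnion, exists_prop, mem_sdiff]
  constructor
  · rintro ⟨i, hi, hp⟩
    refine ⟨?_, not_mem_interior_of_support (hne i hi) he ?_ (orient_segment hp)⟩
    · exact (convex_convexHull ℝ _).segment_subset (subset_convexHull _ _ (hmem i hi))
        (subset_convexHull _ _ (hmem' i hi)) hp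
    · rintro x ⟨k, hk, rfl⟩
      exact edge_side hclose h hi hk
  · rintro ⟨hp, hpi⟩
    obtain ⟨α, β, h0, hsup⟩ := exists_support hint hpi
    have hface := mem_hull_face hp (fun x hx => hsup x (subset_convexHull _ _ hx))
    have hsupV : ∀ k < n, α * (Vtx σ k).1 + β * (Vtx σ k).2 ≤ α * p.1 + β * p.2 :=
      fun k hk => hsup _ (subset_convexHull _ _ (hmem k hk))
    -- The supporting line meets the vertex set in one vertex or in two adjacent ones.
    by_cases htwo : ∃ a b, a < b ∧ b < n ∧
        α * (Vtx σ a).1 + β * (Vtx σ a).2 = α * p.1 + β * p.2 ∧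
        α * (Vtx σ b).1 + β * (Vtx σ b).2 = α * p.1 + β * p.2
    · obtain ⟨a, b, hab, hb, ha1, hb1⟩ := htwo
      have habne : Vtx σ a ≠ Vtx σ b := fun heq => by
        have := hord a (by omega) b hb heq; omega
      obtain ⟨l, hl, hlx⟩ := support_eq_orient habne h0 (ha1.trans hb1.symm)
      have hpab : p ∈ segment ℝ (Vtx σ a) (Vtx σ b) := by
        rw [← convexHull_pair]
        refine convexHull_mono ?_ hface
        rintro x ⟨⟨k, hk, rfl⟩, hx⟩
        by_contra hcon
        simp only [mem_insert_iff, mem_singleton_iff, not_or] at hcon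
        have := hlx (Vtx σ k)
        rw [hx, ha1, sub_self] at this
        exact mul_ne_zero hl (orient_ne_zero habne (Ne.symm hcon.2) (Ne.symm hcon.1)) this.symm
      by_cases hadj : b = a + 1
      · exact ⟨a, by omega, hadj ▸ hpab⟩
      by_cases hadj' : a = 0 ∧ b + 1 = n
      · refine ⟨b, hb, ?_⟩
        rw [hadj'.2, hclose, segment_symm, ← hadj'.1]
        exact hpab
      exfalso
      -- Otherwise some vertices lie strictly on either side of the chord.
      have hin := h a (a + 1) b (by omega) (by omega) hb
      rw [orient_swap] at hin
      have s1 := hsupV (a + 1) (by omega)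
      have e1 := hlx (Vtx σ (a + 1))
      obtain ⟨m, hm, hout⟩ : ∃ m < n, 0 < e * orient (Vtx σ a) (Vtx σ b) (Vtx σ m) := by
        rcases Nat.eq_zero_or_pos a with ha | ha
        · exact ⟨b + 1, by omega, h a b (b + 1) hab (by omega) (by omega)⟩
        · refine ⟨0, by omega, ?_⟩
          rw [← orient_rotate]
          exact h 0 a b ha hab hb
      have s2 := hsupV m hm
      have e2 := hlx (Vtx σ m)
      generalize orient (Vtx σ a) (Vtx σ b) (Vtx σ m) = x at *
      generalize orient (Vtx σ a) (Vtx σ b) (Vtx σ (a + 1)) = y at *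
      have hx : l * x ≤ 0 := by linarith
      have hy : l * y ≤ 0 := by linarith
      have hxy : 0 < (e * x) * (e * -y) := mul_pos hout hin
      have h5 : 0 ≤ (l * x) * (l * y) := mul_nonneg_of_nonpos_of_nonpos hx hy
      have h6 : 0 < l ^ 2 * ((e * x) * (e * -y)) := by positivity
      have h7 : l ^ 2 * ((e * x) * (e * -y)) = - (e ^ 2 * ((l * x) * (l * y))) := by ring
      have h8 : 0 ≤ e ^ 2 * ((l * x) * (l * y)) := by positivity
      linarith
    · obtain ⟨q, hq⟩ := convexHull_nonempty_iff.1 ⟨p, hface⟩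
      obtain ⟨⟨a, ha, rfl⟩, ha1⟩ := hq
      refine ⟨a, ha, ?_⟩
      have hsub : p ∈ convexHull ℝ {Vtx σ a} := by
        refine convexHull_mono ?_ hface
        rintro x ⟨⟨k, hk, rfl⟩, hx⟩
        rw [mem_singleton_iff]
        rcases lt_trichotomy k a with h1 | h1 | h1
        · exact absurd ⟨k, a, h1, ha, hx, ha1⟩ htwo
        · rw [h1]
        · exact absurd ⟨a, k, h1, hk, ha1, hx⟩ htwo
      rw [convexHull_singleton, mem_singleton_iff] at hsub
      rw [hsub]
      exact left_mem_segment _ _ _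

/-! ### Lifts of the angles to one counterclockwise turn -/

/-- `τ` lifts the angles so that the vertices are traversed once counterclockwise:
`τ` increases from `0` to `2π` and agrees with `σ` modulo `2π`. -/
def IsLift (n : ℕ) (σ τ : ℕ → ℝ) : Prop :=
  τ 0 = 0 ∧ τ n = 2 * π ∧ (∀ i < n, τ i < τ (i + 1)) ∧
    ∀ i ≤ n, ∃ z : ℤ, σ i = τ i + z * (2 * π)

lemma IsLift.lt {n : ℕ} {σ τ : ℕ → ℝ} (h : IsLift n σ τ) {i j : ℕ} (hij : i < j) (hj : j ≤ n) :
    τ i < τ j := by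
  induction j, hij using Nat.le_induction with
  | base => exact h.2.2.1 i (by omega)
  | succ k hk ih => exact (ih (by omega)).trans (h.2.2.1 k (by omega))

lemma IsLift.Vtx_eq {n : ℕ} {σ τ : ℕ → ℝ} (h : IsLift n σ τ) {i : ℕ} (hi : i ≤ n) :
    Vtx σ i = Vtx τ i := by
  obtain ⟨z, hz⟩ := h.2.2.2 i hi
  simp [Vtx, hz]

lemma IsLift.orient_pos {n : ℕ} {σ τ : ℕ → ℝ} (h : IsLift n σ τ) {i j k : ℕ} (hij : i < j)
    (hjk : j < k) (hk : k < n) : 0 < orient (Vtx σ i) (Vtx σ j) (Vtx σ k) := by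
  rw [h.Vtx_eq (by omega), h.Vtx_eq (by omega), h.Vtx_eq (by omega), orient_Vtx]
  have h0 : 0 ≤ τ i := by
    rcases Nat.eq_zero_or_pos i with rfl | hi
    · exact h.1.ge
    · have := h.lt hi (by omega)
      rw [h.1] at this; exact this.le
  have h1 := h.lt hij (by omega)
  have h2 := h.lt hjk (by omega)
  have h3 := h.lt hk le_rfl
  rw [h.2.1] at h3
  have s1 := Real.sin_pos_of_pos_of_lt_pi (x := (τ j - τ i) / 2) (by linarith) (by linarith)
  have s2 := Real.sin_pos_of_pos_of_lt_pi (x := (τ k - τ j) / 2) (by linarith) (by linarith)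
  have s3 := Real.sin_pos_of_pos_of_lt_pi (x := (τ k - τ i) / 2) (by linarith) (by linarith)
  positivity

/-- Conditions (I) and (III): the central angles of a counterclockwise convex polygon. -/
def CCWAngles (n : ℕ) (σ : ℕ → ℝ) (w : ℤ) : Prop :=
  (w = 1 ∧ ∀ i < n, 0 < σ (i + 1) - σ i) ∨
    (w = 0 ∧ ∃ i < n, σ (i + 1) - σ i < 0 ∧ ∀ j < n, j ≠ i → 0 < σ (j + 1) - σ j)

lemma exists_lift_of_angles {n : ℕ} {σ : ℕ → ℝ} (hσ0 : σ 0 = 0)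
    (hθ : ∀ i < n, |σ (i + 1) - σ i| ≤ π) {w : ℤ} (hw : σ n = 2 * π * w)
    (h : CCWAngles n σ w) : ∃ τ, IsLift n σ τ := by
  rcases h with ⟨rfl, h⟩ | ⟨rfl, m, hm, -, h⟩
  · exact ⟨σ, hσ0, by simpa using hw, fun i hi => by linarith [h i hi],
      fun i _ => ⟨0, by simp⟩⟩
  · -- Adding a full turn after the negative step makes every step positive.
    refine ⟨fun k => if k ≤ m then σ k else σ k + 2 * π, by simp [hσ0], ?_, ?_, ?_⟩
    · simp [hm, hw]
    · intro i hi
      have hpi := Real.pi_pos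
      have := (abs_le.1 (hθ i hi)).1
      rcases lt_trichotomy i m with h1 | h1 | h1
      · have := h i hi h1.ne
        simp only [show i ≤ m by omega, show i + 1 ≤ m by omega, if_true]; linarith
      · simp only [show i ≤ m by omega, show ¬ i + 1 ≤ m by omega, if_true, if_false]; linarith
      · have := h i hi h1.ne'
        simp only [show ¬ i ≤ m by omega, show ¬ i + 1 ≤ m by omega, if_false]; linarith
    · intro i _
      by_cases h1 : i ≤ m
      · exact ⟨0, by simp [h1]⟩
      · exact ⟨-1, by simp [h1]⟩

/-- A central angle differs from the gap of the lift by `0` or by a full turn down, the latter only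
for a gap of at least `π`; as `n ≥ 3`, at most one gap is that large. -/
lemma angles_of_lift {n : ℕ} (hn : 3 ≤ n) {σ τ : ℕ → ℝ} (hσ0 : σ 0 = 0)
    (hθ : ∀ i < n, |σ (i + 1) - σ i| ≤ π) {w : ℤ} (hw : σ n = 2 * π * w)
    (h : IsLift n σ τ) : CCWAngles n σ w := by
  have hpi := Real.pi_pos
  have hτ0 : ∀ i, 0 < i → i ≤ n → 0 < τ i := fun i h1 h2 => by
    have := h.lt h1 h2; rwa [h.1] at this
  have hτ0' : ∀ i ≤ n, 0 ≤ τ i := fun i h2 => by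
    rcases Nat.eq_zero_or_pos i with rfl | h1
    · exact h.1.ge
    · exact (hτ0 i h1 h2).le
  have hτn : ∀ i < n, τ i < 2 * π := fun i h1 => by
    have := h.lt h1 le_rfl; rwa [h.2.1] at this
  have hτn' : ∀ i ≤ n, τ i ≤ 2 * π := fun i h2 => by
    rcases h2.lt_or_eq with h1 | rfl
    · exact (hτn i h1).le
    · exact h.2.1.le
  have hle : ∀ i j, i ≤ j → j ≤ n → τ i ≤ τ j := fun i j h1 h2 => by
    rcases h1.lt_or_eq with h1 | rfl
    · exact (h.lt h1 h2).le
    · exact le_rfl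
  -- Each central angle is the gap of the lift, possibly minus a full turn.
  have hcase : ∀ i < n, σ (i + 1) - σ i = τ (i + 1) - τ i ∨
      σ (i + 1) - σ i = τ (i + 1) - τ i - 2 * π := by
    intro i hi
    obtain ⟨y, hy⟩ := h.2.2.2 i hi.le
    obtain ⟨z, hz⟩ := h.2.2.2 (i + 1) hi
    have hb := abs_le.1 (hθ i hi)
    have hg := h.2.2.1 i hi
    have hg0 := hτ0' i hi.le
    have hgn := hτn' (i + 1) hi
    have heq : σ (i + 1) - σ i = τ (i + 1) - τ i + ((z - y : ℤ) : ℝ) * (2 * π) := by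
      push_cast; linarith
    have h1 : z - y < 1 := by
      by_contra! hcon
      have : (1 : ℝ) ≤ ((z - y : ℤ) : ℝ) := by exact_mod_cast hcon
      nlinarith
    have h2 : -2 < z - y := by
      by_contra! hcon
      have : ((z - y : ℤ) : ℝ) ≤ (-2 : ℝ) := by exact_mod_cast hcon
      nlinarith
    obtain h3 | h3 : z - y = 0 ∨ z - y = -1 := by omega
    · left; rw [heq, h3]; simp
    · right; rw [heq, h3]; push_cast; ring
  -- Two disjoint gaps leave room for a third one.
  have hgap : ∀ i j, i < j → j < n → (τ (i + 1) - τ i) + (τ (j + 1) - τ j) < 2 * π := by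
    intro i j hij hj
    have a1 := hτ0' i (by omega)
    have a2 := hle (i + 1) j hij hj.le
    have a3 := hτn' (j + 1) hj
    rcases Nat.eq_zero_or_pos i with h1 | h1
    · rcases Nat.lt_or_ge (i + 1) j with h2 | h2
      · linarith [h.lt h2 hj.le]
      · linarith [hτn (j + 1) (by omega)]
    · linarith [hτ0 i h1 (by omega)]
  have hsumσ : ∑ i ∈ Finset.range n, (σ (i + 1) - σ i) = 2 * π * w := by
    rw [Finset.sum_range_sub, hσ0, hw, sub_zero]
  have hsumτ : ∑ i ∈ Finset.range n, (τ (i + 1) - τ i) = 2 * π := by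
    rw [Finset.sum_range_sub, h.1, h.2.1, sub_zero]
  by_cases hneg : ∃ m < n, σ (m + 1) - σ m = τ (m + 1) - τ m - 2 * π
  · obtain ⟨m, hm, hθm⟩ := hneg
    have hothers : ∀ j < n, j ≠ m → σ (j + 1) - σ j = τ (j + 1) - τ j := by
      intro j hj hjm
      refine (hcase j hj).resolve_right fun hcon => ?_
      have b1 := (abs_le.1 (hθ m hm)).1
      have b2 := (abs_le.1 (hθ j hj)).1
      rcases lt_or_gt_of_ne hjm with h1 | h1
      · linarith [hgap j m h1 hm]
      · linarith [hgap m j h1 hj]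
    refine Or.inr ⟨?_, m, hm, ?_, ?_⟩
    · have : ∑ i ∈ Finset.range n, (σ (i + 1) - σ i) =
          ∑ i ∈ Finset.range n, ((τ (i + 1) - τ i) - if i = m then 2 * π else 0) := by
        refine Finset.sum_congr rfl fun i hi => ?_
        by_cases him : i = m
        · subst him; simp [hθm]
        · simp [him, hothers i (Finset.mem_range.1 hi) him]
      rw [hsumσ, Finset.sum_sub_distrib (f := fun i => τ (i + 1) - τ i), hsumτ] at this
      simpa [hm, hpi.ne'] using this
    · have : τ (m + 1) - τ m < 2 * π := by
        rcases Nat.eq_zero_or_pos m with rfl | h1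
        · have := hτn (0 + 1) (by omega)
          linarith [hτ0' 0 (by omega)]
        · linarith [hτ0 m h1 hm.le, hτn' (m + 1) hm]
      linarith
    · intro j hj hjm
      rw [hothers j hj hjm]; linarith [h.2.2.1 j hj]
  · push Not at hneg
    have hall : ∀ j < n, σ (j + 1) - σ j = τ (j + 1) - τ j := fun j hj =>
      (hcase j hj).resolve_right (hneg j hj)
    refine Or.inl ⟨?_, fun j hj => by rw [hall j hj]; linarith [h.2.2.1 j hj]⟩
    rw [Finset.sum_congr rfl fun i hi => hall i (Finset.mem_range.1 hi), hsumτ] at hsumσ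
    have : (w : ℝ) = 1 := by
      have : 2 * π * (w - 1) = 0 := by linarith
      have := (mul_eq_zero.1 this).resolve_left (by positivity)
      linarith
    exact_mod_cast this

/-- Fan criterion: if no triangle `V_i V_{i+1} V_k` is clockwise, then the reductions of the angles
to `[0, 2π)` increase, because the triangles `V_i V_{i+1} V_0` are counterclockwise. -/
lemma exists_lift_of_orient {n : ℕ} (hn : 0 < n) {σ : ℕ → ℝ} (hσ0 : σ 0 = 0)
    {w : ℤ} (hw : σ n = 2 * π * w) (hord : Ordinary n σ)
    (h : ∀ i, i + 1 < n → ∀ k < n, 0 ≤ orient (Vtx σ i) (Vtx σ (i + 1)) (Vtx σ k)) :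
    ∃ τ, IsLift n σ τ := by
  have hp : 0 < 2 * π := by positivity
  set ρ : ℕ → ℝ := fun i => toIcoMod hp 0 (σ i) with hρ
  have hρmem : ∀ i, 0 ≤ ρ i ∧ ρ i < 2 * π := fun i => by
    simpa using toIcoMod_mem_Ico hp 0 (σ i)
  have hρσ : ∀ i, ∃ z : ℤ, σ i = ρ i + z * (2 * π) := fun i =>
    ⟨toIcoDiv hp 0 (σ i), by
      rw [← zsmul_eq_mul]; exact (toIcoMod_add_toIcoDiv_zsmul hp 0 (σ i)).symm⟩
  have hV : ∀ i, Vtx σ i = Vtx ρ i := fun i => by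
    obtain ⟨z, hz⟩ := hρσ i
    simp [Vtx, hz]
  have hρ0 : ρ 0 = 0 := by
    simp [hρ, hσ0]
  have hρpos : ∀ i < n, 0 < i → 0 < ρ i := by
    intro i hi hi0
    rcases (hρmem i).1.eq_or_lt with h1 | h1
    · exfalso
      have : Vtx σ i = Vtx σ 0 := by rw [hV, hV]; simp [Vtx, ← h1, hρ0]
      have := hord i hi 0 (by omega) this
      omega
    · exact h1
  have hstep : ∀ i, i + 1 < n → ρ i < ρ (i + 1) := by
    intro i hi
    rcases Nat.eq_zero_or_pos i with rfl | hi0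
    · rw [hρ0]; exact hρpos _ hi (by omega)
    · have h1 := h i hi 0 (by omega)
      have hne : orient (Vtx σ i) (Vtx σ (i + 1)) (Vtx σ 0) ≠ 0 := by
        apply orient_ne_zero
        · intro heq; have := hord _ (by omega) _ hi heq; omega
        · intro heq; have := hord _ hi _ (by omega) heq; omega
        · intro heq; have := hord _ (by omega) _ (by omega) heq; omega
      have h2 := lt_of_le_of_ne h1 hne.symm
      by_contra! hcon
      rw [hV, hV, hV, orient_Vtx, hρ0] at h2
      have a1 := hρpos i (by omega) hi0
      have a2 := hρpos (i + 1) hi (by omega)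
      have b1 := (hρmem i).2
      have b2 := (hρmem (i + 1)).2
      have s1 := Real.sin_nonneg_of_nonneg_of_le_pi (x := (ρ i - ρ (i + 1)) / 2)
        (by linarith) (by linarith)
      have s2 := Real.sin_nonneg_of_nonneg_of_le_pi (x := ρ (i + 1) / 2)
        (by linarith) (by linarith)
      have s3 := Real.sin_nonneg_of_nonneg_of_le_pi (x := ρ i / 2)
        (by linarith) (by linarith)
      rw [show (ρ (i + 1) - ρ i) / 2 = -((ρ i - ρ (i + 1)) / 2) by ring,
        show (0 - ρ (i + 1)) / 2 = -(ρ (i + 1) / 2) by ring,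
        show (0 - ρ i) / 2 = -(ρ i / 2) by ring] at h2
      simp only [Real.sin_neg] at h2
      have := mul_nonneg (mul_nonneg s1 s2) s3
      nlinarith
  refine ⟨fun i => if i < n then ρ i else 2 * π, ?_, by simp, ?_, ?_⟩
  · simp [hn, hρ0]
  · intro i hi
    by_cases h1 : i + 1 < n
    · simp only [hi, h1, if_true]; exact hstep i h1
    · simp only [hi, h1, if_true, if_false]; exact (hρmem i).2
  · intro i hi
    by_cases h1 : i < n
    · simpa only [h1, if_true] using hρσ i
    · obtain rfl : i = n := by omega
      refine ⟨w - 1, ?_⟩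
      simp only [lt_irrefl, if_false, hw]; push_cast; ring

/-! ### Edges of a convex polygon -/

/-- In a convex polygon the line through an edge is a supporting line, since the midpoint of the
edge lies on the frontier of the hull. -/
lemma edge_side_of_convex {n : ℕ} (hn : 3 ≤ n) {σ : ℕ → ℝ} (hord : Ordinary n σ)
    (hc : IsConvexPolygon n σ) {i : ℕ} (hi : i + 1 < n) :
    (∀ k < n, 0 ≤ orient (Vtx σ i) (Vtx σ (i + 1)) (Vtx σ k)) ∨
      (∀ k < n, orient (Vtx σ i) (Vtx σ (i + 1)) (Vtx σ k) ≤ 0) := by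
  have hmem : ∀ i < n, Vtx σ i ∈ convexHull ℝ {p | ∃ i < n, p = Vtx σ i} :=
    fun i hi => subset_convexHull _ _ ⟨i, hi, rfl⟩
  have hne : ∀ i < n, ∀ j < n, i ≠ j → Vtx σ i ≠ Vtx σ j :=
    fun i hi j hj hij heq => hij (hord i hi j hj heq)
  have hint : (interior (convexHull ℝ {p | ∃ i < n, p = Vtx σ i})).Nonempty :=
    interior_hull_nonempty (A := Vtx σ 0) (B := Vtx σ 1) (C := Vtx σ 2)
      ⟨0, by omega, rfl⟩ ⟨1, by omega, rfl⟩ ⟨2, by omega, rfl⟩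
      (orient_ne_zero (hne _ (by omega) _ (by omega) (by omega))
        (hne _ (by omega) _ (by omega) (by omega)) (hne _ (by omega) _ (by omega) (by omega)))
  have hmid : midpoint ℝ (Vtx σ i) (Vtx σ (i + 1)) ∈
      frontier (convexHull ℝ {p | ∃ i < n, p = Vtx σ i}) := by
    rw [← hc]
    simp only [Finset.mem_range, mem_iUnion, exists_prop]
    exact ⟨i, by omega, midpoint_mem_segment _ _⟩
  obtain ⟨α, β, h0, hsup⟩ := exists_support hint hmid.2
  have hfst : (midpoint ℝ (Vtx σ i) (Vtx σ (i + 1))).1 =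
      ((Vtx σ i).1 + (Vtx σ (i + 1)).1) / 2 := by
    simp [midpoint_eq_smul_add]; ring
  have hsnd : (midpoint ℝ (Vtx σ i) (Vtx σ (i + 1))).2 =
      ((Vtx σ i).2 + (Vtx σ (i + 1)).2) / 2 := by
    simp [midpoint_eq_smul_add]; ring
  rw [hfst, hsnd] at hsup
  have e1 := hsup _ (hmem i (by omega))
  have e2 := hsup _ (hmem (i + 1) hi)
  obtain ⟨l, hl, hlx⟩ := support_eq_orient (hne i (by omega) (i + 1) hi (by omega)) h0
    (by linarith)
  have hle : ∀ k < n, l * orient (Vtx σ i) (Vtx σ (i + 1)) (Vtx σ k) ≤ 0 := fun k hk => by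
    rw [← hlx]; linarith [hsup _ (hmem k hk)]
  rcases hl.lt_or_gt with hl | hl
  · exact Or.inl fun k hk => nonneg_of_mul_nonpos_right (hle k hk) hl
  · exact Or.inr fun k hk => nonpos_of_mul_nonpos_right (hle k hk) hl

/-- The supporting sides of consecutive edges agree, since both are read off from the
nondegenerate triangle `V_i V_{i+1} V_{i+2}`. -/
lemma all_edges_same_side {n : ℕ} {σ : ℕ → ℝ} (hord : Ordinary n σ)
    (h : ∀ i, i + 1 < n → (∀ k < n, 0 ≤ orient (Vtx σ i) (Vtx σ (i + 1)) (Vtx σ k)) ∨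
      (∀ k < n, orient (Vtx σ i) (Vtx σ (i + 1)) (Vtx σ k) ≤ 0))
    (h0 : ∀ k < n, 0 ≤ orient (Vtx σ 0) (Vtx σ 1) (Vtx σ k)) :
    ∀ i, i + 1 < n → ∀ k < n, 0 ≤ orient (Vtx σ i) (Vtx σ (i + 1)) (Vtx σ k) := by
  intro i
  induction i with
  | zero => exact fun _ => h0
  | succ i ih =>
    intro hi
    refine (h (i + 1) hi).resolve_right fun hcon => ?_
    have h1 := ih (by omega) (i + 2) hi
    have h2 := hcon i (by omega)
    rw [← orient_rotate] at h2
    refine orient_ne_zero ?_ ?_ ?_ (le_antisymm h2 h1) <;>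
    · intro heq
      have := hord _ (by omega) _ (by omega) heq
      omega

lemma Vtx_neg_eq_iff (σ : ℕ → ℝ) (i j : ℕ) : Vtx (-σ) i = Vtx (-σ) j ↔ Vtx σ i = Vtx σ j := by
  simp [Vtx]

lemma Ordinary.neg {n : ℕ} {σ : ℕ → ℝ} (h : Ordinary n σ) : Ordinary n (-σ) :=
  fun i hi j hj heq => h i hi j hj ((Vtx_neg_eq_iff σ i j).1 heq)

/-- A convex polygon satisfies the counterclockwise conditions, or its mirror image does. -/
lemma angles_of_convex {n : ℕ} (hn : 3 ≤ n) {σ : ℕ → ℝ} (hσ0 : σ 0 = 0)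
    (hθ : ∀ i < n, |σ (i + 1) - σ i| ≤ π) {w : ℤ} (hw : σ n = 2 * π * w)
    (hord : Ordinary n σ) (hc : IsConvexPolygon n σ) :
    CCWAngles n σ w ∨ CCWAngles n (-σ) (-w) := by
  have hside := fun i (hi : i + 1 < n) => edge_side_of_convex hn hord hc hi
  have hw' : (-σ) n = 2 * π * ((-w : ℤ) : ℝ) := by simp [hw]
  have hθ' : ∀ i < n, |(-σ) (i + 1) - (-σ) i| ≤ π := fun i hi => by
    rw [Pi.neg_apply, Pi.neg_apply, neg_sub_neg, abs_sub_comm]; exact hθ i hi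
  have hσ0' : (-σ) 0 = 0 := by simp [hσ0]
  rcases hside 0 (by omega) with h0 | h0
  · left
    obtain ⟨τ, hτ⟩ := exists_lift_of_orient (by omega) hσ0 hw hord (all_edges_same_side hord hside h0)
    exact angles_of_lift hn hσ0 hθ hw hτ
  · right
    have hside' : ∀ i, i + 1 < n →
        (∀ k < n, 0 ≤ orient (Vtx (-σ) i) (Vtx (-σ) (i + 1)) (Vtx (-σ) k)) ∨
        (∀ k < n, orient (Vtx (-σ) i) (Vtx (-σ) (i + 1)) (Vtx (-σ) k) ≤ 0) := by
      intro i hi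
      simpa only [orient_neg, neg_nonneg, neg_nonpos] using (hside i hi).symm
    obtain ⟨τ, hτ⟩ := exists_lift_of_orient (by omega) hσ0' hw' hord.neg
      (all_edges_same_side hord.neg hside' (by simpa [orient_neg] using h0))
    exact angles_of_lift hn hσ0' hθ' hw' hτ

lemma convex_of_angles {n : ℕ} (hn : 3 ≤ n) {σ : ℕ → ℝ} (hσ0 : σ 0 = 0)
    (hθ : ∀ i < n, |σ (i + 1) - σ i| ≤ π) {w : ℤ} (hw : σ n = 2 * π * w)
    (hord : Ordinary n σ) (h : CCWAngles n σ w ∨ CCWAngles n (-σ) (-w)) :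
    IsConvexPolygon n σ := by
  have hclose : Vtx σ n = Vtx σ 0 := by
    have : σ n = σ 0 + w * (2 * π) := by rw [hw, hσ0]; ring
    simp only [Vtx, this, Real.cos_add_int_mul_two_pi, Real.sin_add_int_mul_two_pi]
  rcases h with h | h
  · obtain ⟨τ, hτ⟩ := exists_lift_of_angles hσ0 hθ hw h
    refine isConvex_of_orient hn (e := 1) hclose hord fun i j k h1 h2 h3 => ?_
    rw [one_mul]; exact hτ.orient_pos h1 h2 h3
  · obtain ⟨τ, hτ⟩ := exists_lift_of_angles (σ := -σ) (w := -w) (by simp [hσ0])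
      (fun i hi => by
        rw [Pi.neg_apply, Pi.neg_apply, neg_sub_neg, abs_sub_comm]; exact hθ i hi)
      (by simp [hw]) h
    refine isConvex_of_orient hn (e := -1) hclose hord fun i j k h1 h2 h3 => ?_
    have := hτ.orient_pos h1 h2 h3
    rw [orient_neg] at this
    linarith

/-! ### The characterization -/

theorem convex_iff_central_angles
    (n : ℕ) (hn : 3 ≤ n) (σ : ℕ → ℝ) (hσ0 : σ 0 = 0)
    (hθ : ∀ i < n, σ (i + 1) - σ i ∈ Set.Ioc (-π) π)
    (w : ℤ) (hw : σ n = 2 * π * w)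
    (hord : Ordinary n σ) :
    IsConvexPolygon n σ ↔
      ((w = 1 ∧ ∀ i < n, 0 < σ (i + 1) - σ i) ∨
       (w = -1 ∧ ∀ i < n, σ (i + 1) - σ i < 0) ∨
       (w = 0 ∧ ∃ i < n, σ (i + 1) - σ i < 0 ∧
          ∀ j < n, j ≠ i → 0 < σ (j + 1) - σ j) ∨
       (w = 0 ∧ ∃ i < n, 0 < σ (i + 1) - σ i ∧
          ∀ j < n, j ≠ i → σ (j + 1) - σ j < 0)) := by
  have hθ' : ∀ i < n, |σ (i + 1) - σ i| ≤ π := fun i hi =>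
    abs_le.2 ⟨(hθ i hi).1.le, (hθ i hi).2⟩
  have hiff : IsConvexPolygon n σ ↔ CCWAngles n σ w ∨ CCWAngles n (-σ) (-w) :=
    ⟨angles_of_convex hn hσ0 hθ' hw hord, convex_of_angles hn hσ0 hθ' hw hord⟩
  have hneg : CCWAngles n (-σ) (-w) ↔ (w = -1 ∧ ∀ i < n, σ (i + 1) - σ i < 0) ∨
      (w = 0 ∧ ∃ i < n, 0 < σ (i + 1) - σ i ∧ ∀ j < n, j ≠ i → σ (j + 1) - σ j < 0) := by
    have e : ∀ i, (-σ) (i + 1) - (-σ) i = -(σ (i + 1) - σ i) := fun i => by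
      simp only [Pi.neg_apply]; ring
    simp only [CCWAngles, e, Left.neg_pos_iff, Left.neg_neg_iff, neg_eq_iff_eq_neg, neg_zero]
  rw [hiff, hneg, CCWAngles, or_or_or_comm, or_assoc]
end

section
/- Suppose that w = 1 (i.e., σ(n) = 2π) and θ_i > 0 for every i ∈ {0,…,n−1}. Then Δ_{j,i,i⊕1} > 0 for every i ∈ {0,…,n−1} and every j ∈ {0,…,n−1} \ {i, i⊕1}. -/
/-!
The determinant of three points on the unit circle at angles `a`, `b`, `c` factors as
`4 sin ((b - a) / 2) sin ((c - b) / 2) sin ((c - a) / 2)` (`circleDet_eq`), so it is positive as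
soon as the angles, up to a cyclic rotation of the three points, lie in increasing order in a
window of length less than `2π`. Positive central angles with total `2π` make `σ` strictly
increasing from `0` to `2π` (`strictMono_angles`). Since `σ n` and `σ 0` give the same point, the
vertex with index `i ⊕ 1` is the point at angle `σ (i + 1)`, and a vertex `j` other than `i` and
`i ⊕ 1` comes either before `i` or after `i + 1` in this order.
-/

open Real Set

theorem circleDet_eq (a b c : ℝ) :
    Matrix.det !![1, Real.cos a, Real.sin a;
                  1, Real.cos b, Real.sin b;
                  1, Real.cos c, Real.sin c] =
      4 * Real.sin ((b - a) / 2) * Real.sin ((c - b) / 2) * Real.sin ((c - a) / 2) := by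
  have h1 : Matrix.det !![1, Real.cos a, Real.sin a;
                  1, Real.cos b, Real.sin b;
                  1, Real.cos c, Real.sin c] =
      Real.sin (c - b) - Real.sin (c - a) + Real.sin (b - a) := by
    rw [Matrix.det_fin_three]
    simp [Real.sin_sub]
    ring
  have h2 : ∀ x y : ℝ, Real.sin (2 * y) - Real.sin (2 * (x + y)) + Real.sin (2 * x) =
      4 * Real.sin x * Real.sin y * Real.sin (x + y) := by
    intro x y
    simp only [Real.sin_two_mul, Real.sin_add, Real.cos_add]
    linear_combination
      (-2 * Real.sin x * Real.cos x) * Real.sin_sq_add_cos_sq y +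
        (-2 * Real.sin y * Real.cos y) * Real.sin_sq_add_cos_sq x
  have h3 := h2 ((b - a) / 2) ((c - b) / 2)
  rw [h1]
  convert h3 using 3 <;> ring_nf

theorem circleDet_pos {a b c : ℝ} (hab : a < b) (hbc : b < c) (hca : c < a + 2 * π) :
    0 < Matrix.det !![1, Real.cos a, Real.sin a;
                      1, Real.cos b, Real.sin b;
                      1, Real.cos c, Real.sin c] := by
  rw [circleDet_eq]
  have h1 : 0 < Real.sin ((b - a) / 2) :=
    Real.sin_pos_of_pos_of_lt_pi (by linarith) (by linarith)
  have h2 : 0 < Real.sin ((c - b) / 2) :=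
    Real.sin_pos_of_pos_of_lt_pi (by linarith) (by linarith)
  have h3 : 0 < Real.sin ((c - a) / 2) :=
    Real.sin_pos_of_pos_of_lt_pi (by linarith) (by linarith)
  positivity

theorem strictMono_angles {n : ℕ} {σ : ℕ → ℝ} (hpos : ∀ i < n, 0 < σ (i + 1) - σ i)
    {a b : ℕ} (hab : a < b) (hb : b ≤ n) : σ a < σ b := by
  induction b, hab using Nat.le_induction with
  | base => linarith [hpos a (by omega)]
  | succ k hk ih => linarith [hpos k (by omega), ih (by omega)]

theorem det_pos_of_case_I
    (n : ℕ) (hn : 3 ≤ n) (σ : ℕ → ℝ) (hσ0 : σ 0 = 0)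
    (hθ : ∀ i < n, σ (i + 1) - σ i ∈ Set.Ioc (-π) π)
    (w : ℤ) (hw : σ n = 2 * π * w)
    (hw1 : w = 1) (hpos : ∀ i < n, 0 < σ (i + 1) - σ i) :
    ∀ i < n, ∀ j < n, j ≠ i → j ≠ oplus n i → 0 < Det3 σ j i (oplus n i) := by
  intro i hi j hj hji hjo
  have hσn : σ n = 2 * π := by rw [hw, hw1]; simp
  have mono : ∀ {a b : ℕ}, a < b → b ≤ n → σ a < σ b :=
    fun hab hb => strictMono_angles hpos hab hb
  have hj0 : 0 ≤ σ j := by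
    rcases Nat.eq_zero_or_pos j with rfl | h
    · exact hσ0.ge
    · exact hσ0 ▸ (mono h hj.le).le
  have hi0 : 0 ≤ σ i := by
    rcases Nat.eq_zero_or_pos i with rfl | h
    · exact hσ0.ge
    · exact hσ0 ▸ (mono h hi.le).le
  have hii : σ i < σ (i + 1) := mono (Nat.lt_succ_self i) hi
  unfold Det3
  by_cases hin : i + 1 < n
  · have ho : oplus n i = i + 1 := by simp [oplus, hin]
    rw [ho] at hjo ⊢
    rcases lt_or_gt_of_ne hji with h | h
    · exact circleDet_pos (mono h hi.le) hii (by linarith [mono hin le_rfl])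
    · -- The cyclic order is now `i, i + 1, j`; subtracting `2π` from the angle of `j` puts it first.
      have key := circleDet_pos (a := σ j - 2 * π) (b := σ i) (c := σ (i + 1))
        (by linarith [mono hj le_rfl]) hii
        (by linarith [mono (show i + 1 < j by omega) hj.le])
      rwa [Real.cos_sub_two_pi, Real.sin_sub_two_pi] at key
  · have ho : oplus n i = 0 := by simp [oplus, hin]
    rw [ho] at hjo ⊢
    -- The vertex with index `0` is taken at angle `σ n = 2π`, so that it comes last.
    have hj1 : 0 < σ j := hσ0 ▸ mono (Nat.pos_of_ne_zero hjo) hj.le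
    have key := circleDet_pos (a := σ j) (b := σ i) (c := 2 * π)
      (mono (by omega) hi.le) (hσn ▸ mono hi le_rfl) (by linarith)
    rw [Real.cos_two_pi, Real.sin_two_pi] at key
    rwa [hσ0, Real.cos_zero, Real.sin_zero]
end

section
/- Suppose that w = −1 (i.e., σ(n) = −2π) and θ_i < 0 for every i ∈ {0,…,n−1}. Then Δ_{j,i,i⊕1} < 0 for every i ∈ {0,…,n−1} and every j ∈ {0,…,n−1} \ {i, i⊕1}. -/
/-! The determinant factors as
`Δ_{a,b,c} = 4 sin ((σ b - σ a) / 2) sin ((σ c - σ b) / 2) sin ((σ c - σ a) / 2)` (`det3_eq`),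
so it is negative whenever `σ a > σ b > σ c` and `σ a - σ c < 2π`, since the three half-differences
then lie in `(-π, 0)` (`det3_neg`). As all central angles are negative and sum to `-2π`, `σ`
decreases strictly from `0` to `-2π`, so this applies to any three indices `a < b < c < n`. Finally,
`j`, `i`, `i ⊕ 1` are always a cyclic rotation of an increasing triple, and `Δ` is invariant under
cyclic rotation (`det3_rotate`). -/

open Real Set

lemma det3_eq (σ : ℕ → ℝ) (a b c : ℕ) :
    Det3 σ a b c =
      4 * sin ((σ b - σ a) / 2) * sin ((σ c - σ b) / 2) * sin ((σ c - σ a) / 2) := by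
  obtain ⟨u, hu⟩ : ∃ u, u = (σ b - σ a) / 2 := ⟨_, rfl⟩
  obtain ⟨v, hv⟩ : ∃ v, v = (σ c - σ b) / 2 := ⟨_, rfl⟩
  have hdet : Det3 σ a b c = sin (σ b - σ a) + sin (σ c - σ b) - sin (σ c - σ a) := by
    simp only [Det3, Matrix.det_fin_three, sin_sub]
    simp
    ring
  rw [hdet, show σ b - σ a = 2 * u by linarith, show σ c - σ b = 2 * v by linarith,
    show σ c - σ a = 2 * u + 2 * v by linarith, show 2 * u / 2 = u by ring,
    show 2 * v / 2 = v by ring, show (2 * u + 2 * v) / 2 = u + v by ring,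
    sin_add (2 * u), sin_add u, sin_two_mul, sin_two_mul, cos_two_mul, cos_two_mul]
  linear_combination (-4 * sin u * cos u) * sin_sq_add_cos_sq v
    - 4 * sin v * cos v * sin_sq_add_cos_sq u

lemma det3_rotate (σ : ℕ → ℝ) (a b c : ℕ) : Det3 σ a b c = Det3 σ b c a := by
  simp only [Det3, Matrix.det_fin_three]
  simp
  ring

lemma det3_neg (σ : ℕ → ℝ) (a b c : ℕ) (hab : σ b < σ a) (hbc : σ c < σ b)
    (hac : σ a - σ c < 2 * π) : Det3 σ a b c < 0 := by
  rw [det3_eq]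
  have h1 : sin ((σ b - σ a) / 2) < 0 := sin_neg_of_neg_of_neg_pi_lt (by linarith) (by linarith)
  have h2 : sin ((σ c - σ b) / 2) < 0 := sin_neg_of_neg_of_neg_pi_lt (by linarith) (by linarith)
  have h3 : sin ((σ c - σ a) / 2) < 0 := sin_neg_of_neg_of_neg_pi_lt (by linarith) (by linarith)
  have h12 := mul_pos_of_neg_of_neg h1 h2
  rw [mul_assoc 4]
  exact mul_neg_of_pos_of_neg (by linarith) h3

lemma sigma_lt (n : ℕ) (σ : ℕ → ℝ) (hneg : ∀ i < n, σ (i + 1) - σ i < 0) (a b : ℕ)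
    (hab : a < b) (hb : b ≤ n) : σ b < σ a := by
  induction b, hab using Nat.le_induction with
  | base => linarith [hneg a (by omega)]
  | succ k hk ih => linarith [hneg k (by omega), ih (by omega)]

theorem det_neg_of_case_II
    (n : ℕ) (hn : 3 ≤ n) (σ : ℕ → ℝ) (hσ0 : σ 0 = 0)
    (hθ : ∀ i < n, σ (i + 1) - σ i ∈ Set.Ioc (-π) π)
    (w : ℤ) (hw : σ n = 2 * π * w)
    (hw1 : w = -1) (hneg : ∀ i < n, σ (i + 1) - σ i < 0) :
    ∀ i < n, ∀ j < n, j ≠ i → j ≠ oplus n i → Det3 σ j i (oplus n i) < 0 := by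
  have hσn : σ n = -(2 * π) := by rw [hw, hw1]; push_cast; ring
  have hlt := sigma_lt n σ hneg
  have key : ∀ a b c : ℕ, a < b → b < c → c < n → Det3 σ a b c < 0 := by
    intro a b c hab hbc hc
    have hcn := hlt c n hc le_rfl
    have ha0 : σ a ≤ 0 := by
      rcases Nat.eq_zero_or_pos a with rfl | h
      · exact hσ0.le
      · exact hσ0 ▸ (hlt 0 a h (by omega)).le
    exact det3_neg σ a b c (hlt a b hab (by omega)) (hlt b c hbc hc.le) (by linarith)
  intro i hi j hj hji hjo
  unfold oplus at hjo ⊢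
  split_ifs at hjo ⊢ with h
  · rcases lt_or_gt_of_ne hji with hlt' | hgt
    · exact key j i (i + 1) hlt' (by omega) h
    · rw [det3_rotate]
      exact key i (i + 1) j (by omega) (by omega) hj
  · rw [det3_rotate, det3_rotate]
    exact key 0 j i (by omega) (by omega) hi
end

section
/- Suppose that w = 0 (i.e., σ(n) = 0) and there is exactly one index i₀ ∈ {0,…,n−1} with θ_{i₀} > 0, while θ_j < 0 for all j ∈ {0,…,n−1} with j ≠ i₀. Then Δ_{j,i,i⊕1} < 0 for every i ∈ {0,…,n−1} and every j ∈ {0,…,n−1} \ {i, i⊕1}. -/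
/-!
The determinant of three points of the unit circle factors as
`Δ_{a,b,c} = 4 sin((σ b - σ a)/2) sin((σ c - σ b)/2) sin((σ c - σ a)/2)` (`Det3_eq_sin_mul`).

Since the winding number is zero, `σ n = σ 0`, and `σ` decreases along the cyclic sequence
`i₀ + 1, …, n ~ 0, …, i₀`. So `σ i₀` is the least and `σ (i₀ + 1)` the greatest value; they differ
by `θ_{i₀} ≤ π`. Hence every half-difference lies in `[-π/2, π/2]`, where the sign of the sine is
the sign of its argument, and the sign of `Δ` depends only on the order of the three values.
Consecutive indices carry neighbouring values, so for `i ≠ i₀` the value `σ j` lies outside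
`[σ (i ⊕ 1), σ i]`, and for `i = i₀` it lies strictly between the extremes; in each case `Δ < 0`.
-/

open Real Set

/-- The chord factorization of the determinant. -/
lemma Det3_eq_sin_mul (σ : ℕ → ℝ) (a b c : ℕ) :
    Det3 σ a b c = 4 * (Real.sin ((σ b - σ a) / 2) * Real.sin ((σ c - σ b) / 2) *
      Real.sin ((σ c - σ a) / 2)) := by
  -- Passing to half-angles turns the identity into a polynomial one modulo `cos² + sin² = 1`.
  have key : ∀ x y z : ℝ, Matrix.det !![1, Real.cos (2 * x), Real.sin (2 * x);
      1, Real.cos (2 * y), Real.sin (2 * y); 1, Real.cos (2 * z), Real.sin (2 * z)] =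
      4 * (Real.sin (y - x) * Real.sin (z - y) * Real.sin (z - x)) := by
    intro x y z
    rw [Matrix.det_fin_three]
    simp only [Matrix.of_apply, Matrix.cons_val', Matrix.cons_val_zero, Matrix.cons_val_one,
      Matrix.cons_val, Real.sin_sub, Real.cos_two_mul', Real.sin_two_mul]
    have hx := Real.sin_sq_add_cos_sq x
    have hy := Real.sin_sq_add_cos_sq y
    have hz := Real.sin_sq_add_cos_sq z
    grind
  have h := key (σ a / 2) (σ b / 2) (σ c / 2)
  simp only [mul_div_cancel₀ _ (two_ne_zero' ℝ), ← sub_div] at h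
  exact h

lemma sin_half_pos {x : ℝ} (h0 : 0 < x) (h1 : x ≤ π) : 0 < Real.sin (x / 2) :=
  Real.sin_pos_of_pos_of_lt_pi (by linarith) (by linarith)

lemma sin_half_neg {x : ℝ} (h0 : x < 0) (h1 : -π ≤ x) : Real.sin (x / 2) < 0 :=
  Real.sin_neg_of_neg_of_neg_pi_lt (by linarith) (by linarith)

/-- If `f` drops at each step from `a` to `b`, then `f b < f a`. -/
lemma lt_of_steps_neg {f : ℕ → ℝ} {a b : ℕ} (hab : a < b)
    (h : ∀ k, a ≤ k → k < b → f (k + 1) - f k < 0) : f b < f a := by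
  induction b, hab using Nat.le_induction with
  | base => linarith [h a le_rfl (Nat.lt_succ_self a)]
  | succ m hm ih =>
    have h1 := ih fun k hk hk' => h k hk (by omega)
    have h2 := h m (by omega) (by omega)
    linarith

theorem det_neg_of_case_IV
    (n : ℕ) (hn : 3 ≤ n) (σ : ℕ → ℝ) (hσ0 : σ 0 = 0)
    (hθ : ∀ i < n, σ (i + 1) - σ i ∈ Set.Ioc (-π) π)
    (w : ℤ) (hw : σ n = 2 * π * w)
    (hw0 : w = 0) (i₀ : ℕ) (hi₀ : i₀ < n) (hpos : 0 < σ (i₀ + 1) - σ i₀)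
    (hneg : ∀ j < n, j ≠ i₀ → σ (j + 1) - σ j < 0) :
    ∀ i < n, ∀ j < n, j ≠ i → j ≠ oplus n i → Det3 σ j i (oplus n i) < 0 := by
  intro i hi j hj hji hjo
  have hn0 : σ n = σ 0 := by rw [hw, hw0, hσ0]; simp
  have hσo : σ (oplus n i) = σ (i + 1) := by
    unfold oplus
    split_ifs with h
    · rfl
    · rw [← hn0, show i + 1 = n by omega]
  have hj1 : j ≠ i + 1 := by
    rintro rfl
    exact hjo (by simp [oplus, hj])
  have hj2 : i + 1 = n → j ≠ 0 := by
    rintro h rfl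
    exact hjo (by simp [oplus, h])
  have lo : ∀ a b, a < b → b ≤ i₀ → σ b < σ a := fun a b hab hb =>
    lt_of_steps_neg hab fun k _ h2 => hneg k (by omega) (by omega)
  have up : ∀ a b, i₀ < a → a < b → b ≤ n → σ b < σ a := fun a b ha hab hb =>
    lt_of_steps_neg hab fun k h1 h2 => hneg k (by omega) (by omega)
  have lo' : ∀ a b, a ≤ b → b ≤ i₀ → σ b ≤ σ a := fun a b hab hb => by
    rcases hab.eq_or_lt with rfl | h
    exacts [le_rfl, (lo a b h hb).le]
  have up' : ∀ a b, i₀ < a → a ≤ b → b ≤ n → σ b ≤ σ a := fun a b ha hab hb => by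
    rcases hab.eq_or_lt with rfl | h
    exacts [le_rfl, (up a b ha h hb).le]
  have hpi := (hθ i₀ hi₀).2
  have hn1 := up' (i₀ + 1) n (by omega) (by omega) le_rfl
  have h0i := lo' 0 i₀ (by omega) le_rfl
  have bd : ∀ k ≤ n, σ i₀ ≤ σ k ∧ σ k ≤ σ (i₀ + 1) := by
    intro k hk
    rcases le_or_gt k i₀ with h | h
    · have h1 := lo' k i₀ h le_rfl
      have h2 := lo' 0 k (by omega) h
      constructor <;> linarith
    · have h1 := up' (i₀ + 1) k (by omega) h hk
      have h2 := up' k n h hk le_rfl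
      constructor <;> linarith
  obtain ⟨bi1, bi2⟩ := bd i hi.le
  obtain ⟨bj1, bj2⟩ := bd j hj.le
  obtain ⟨bk1, bk2⟩ := bd (i + 1) hi
  -- A vertex before the jump lies below the end of an edge that starts at or after the jump.
  have cross : j ≤ i₀ → i₀ ≤ i → σ j < σ (i + 1) := by
    intro h1 h2
    have h3 := lo' 0 j (by omega) h1
    rcases (show i + 1 ≤ n from hi).eq_or_lt with h | h
    · have h4 := lo 0 j (by have := hj2 h; omega) h1
      rw [h]; linarith
    · have h4 := up (i + 1) n (by omega) h le_rfl
      linarith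
  rw [Det3_eq_sin_mul, hσo]
  suffices hs : Real.sin ((σ i - σ j) / 2) * Real.sin ((σ (i + 1) - σ i) / 2) *
      Real.sin ((σ (i + 1) - σ j) / 2) < 0 by linarith
  by_cases hii : i = i₀
  · subst hii
    have h1 : σ i < σ j := by
      rcases lt_or_gt_of_ne hji with h | h
      · exact lo j i h le_rfl
      · have := up j n h hj le_rfl
        linarith
    have h2 : σ j < σ (i + 1) := by
      rcases lt_or_gt_of_ne hji with h | h
      · exact cross h.le le_rfl
      · exact up (i + 1) j (by omega) (by omega) hj.le
    have s1 := sin_half_neg (x := σ i - σ j) (by linarith) (by linarith)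
    have s2 := sin_half_pos hpos hpi
    have s3 := sin_half_pos (x := σ (i + 1) - σ j) (by linarith) (by linarith)
    exact mul_neg_of_neg_of_pos (mul_neg_of_neg_of_pos s1 s2) s3
  · have hd := hneg i hi hii
    have s2 := sin_half_neg hd (by linarith)
    have hout : σ i < σ j ∨ σ j < σ (i + 1) := by
      rcases le_or_gt j i₀ with h | h
      · rcases lt_or_gt_of_ne hii with h' | h'
        · rcases lt_or_gt_of_ne hji with g | g
          · exact .inl (lo j i g h'.le)
          · exact .inr (lo (i + 1) j (by omega) h)
        · exact .inr (cross h h'.le)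
      · rcases lt_or_gt_of_ne hii with h' | h'
        · have h1 := up j n h hj le_rfl
          have h2 := lo' 0 i (by omega) h'.le
          exact .inl (by linarith)
        · rcases lt_or_gt_of_ne hji with g | g
          · exact .inl (up j i h g hi.le)
          · exact .inr (up (i + 1) j (by omega) (by omega) hj.le)
    rcases hout with h | h
    · have s1 := sin_half_neg (x := σ i - σ j) (by linarith) (by linarith)
      have s3 := sin_half_neg (x := σ (i + 1) - σ j) (by linarith) (by linarith)
      exact mul_neg_of_pos_of_neg (mul_pos_of_neg_of_neg s1 s2) s3
    · have s1 := sin_half_pos (x := σ i - σ j) (by linarith) (by linarith)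
      have s3 := sin_half_pos (x := σ (i + 1) - σ j) (by linarith) (by linarith)
      exact mul_neg_of_neg_of_pos (mul_neg_of_pos_of_neg s1 s2) s3
end

section
/- Suppose the polygon P is ordinary and pattern (P1) holds: there is m ∈ {0,…,n−1} with θ_0 > 0, …, θ_m > 0 and θ_0 + ⋯ + θ_m > 2π. Then there exist i, j, k ∈ {0,…,n−1} and integers p, q such that either σ(j) + 2πp ∈ (σ(i), σ(i+1)) and σ(k) + 2πq ∈ (σ(i+1), σ(i) + 2π), or σ(j) + 2πp ∈ (σ(i+1), σ(i)) and σ(k) + 2πq ∈ (σ(i), σ(i+1) + 2π). -/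
/-!
The partial sums `σ 0 = 0, …, σ (m + 1) > 2π` pass `2π` for a first time, say along the edge from
`V_(s+1)` to `V_(s+2)`. Since the vertices are distinct, `σ (s + 1) < 2π < σ (s + 2)`, so `V_0` lies
strictly inside the arc of this edge. The two consecutive steps from `σ s` to `σ (s + 2)` are each
at most `π`, so `σ (s + 2) ≤ σ s + 2π`, and distinctness makes this strict; as `σ s < σ (s + 1)`,
the vertex `V_s` lies strictly inside the complementary arc. Hence `j = 0` and `k = s`, both lifted
by one full turn, witness the crossing.
-/

open Real Set

theorem Vtx_eq_of_eq_add {σ : ℕ → ℝ} {a b : ℕ} {z : ℤ} (h : σ a = σ b + z * (2 * π)) :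
    Vtx σ a = Vtx σ b := by
  simp only [Vtx, h, Real.cos_add_int_mul_two_pi, Real.sin_add_int_mul_two_pi]

theorem pattern_P1_implies_crossing
    (n : ℕ) (hn : 3 ≤ n) (σ : ℕ → ℝ) (hσ0 : σ 0 = 0)
    (hθ : ∀ i < n, σ (i + 1) - σ i ∈ Set.Ioc (-π) π)
    (w : ℤ) (hw : σ n = 2 * π * w)
    (hord : Ordinary n σ)
    (m : ℕ) (hm : m < n) (hP1pos : ∀ i ≤ m, 0 < σ (i + 1) - σ i)
    (hP1sum : 2 * π < ∑ i ∈ Finset.range (m + 1), (σ (i + 1) - σ i)) :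
    ∃ i < n, ∃ j < n, ∃ k < n, ∃ p q : ℤ,
      (σ j + 2 * π * p ∈ Set.Ioo (σ i) (σ (i + 1)) ∧
        σ k + 2 * π * q ∈ Set.Ioo (σ (i + 1)) (σ i + 2 * π)) ∨
      (σ j + 2 * π * p ∈ Set.Ioo (σ (i + 1)) (σ i) ∧
        σ k + 2 * π * q ∈ Set.Ioo (σ i) (σ (i + 1) + 2 * π)) := by
  classical
  have hpi := Real.pi_pos
  rw [Finset.sum_range_sub, hσ0, sub_zero] at hP1sum
  have hex : ∃ t, 2 * π < σ t := ⟨m + 1, hP1sum⟩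
  obtain ⟨t, ht, htm, hmin⟩ : ∃ t, 2 * π < σ t ∧ t ≤ m + 1 ∧ ∀ u < t, σ u ≤ 2 * π :=
    ⟨Nat.find hex, Nat.find_spec hex, Nat.find_min' hex hP1sum,
      fun u hu => not_lt.mp (Nat.find_min hex hu)⟩
  have h0 := (hθ 0 (by omega)).2
  have h1 := (hθ 1 (by omega)).2
  norm_num at h0 h1
  -- Each step is at most `π`, so at least three steps are needed to pass `2π`.
  obtain ⟨s, rfl, hs⟩ : ∃ s, t = s + 2 ∧ 0 < s := by
    have ht0 : t ≠ 0 := by rintro rfl; linarith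
    have ht1 : t ≠ 1 := by rintro rfl; linarith
    have ht2 : t ≠ 2 := by rintro rfl; linarith
    exact ⟨t - 2, by omega, by omega⟩
  have hstep := (hθ s (by omega)).2
  have hstep' := (hθ (s + 1) (by omega)).2
  have hpos := hP1pos s (by omega)
  have hlt : σ (s + 1) < 2 * π := by
    refine lt_of_le_of_ne (hmin _ (by omega)) fun h => ?_
    have hV : Vtx σ (s + 1) = Vtx σ 0 :=
      Vtx_eq_of_eq_add (z := 1) (by rw [h, hσ0]; push_cast; ring)
    have := hord _ (by omega) _ (by omega) hV
    omega
  have hlt' : σ (s + 2) < σ s + 2 * π := by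
    refine lt_of_le_of_ne (by linarith) fun h => ?_
    rcases Nat.lt_or_ge (s + 2) n with hn' | hn'
    · have hV : Vtx σ (s + 2) = Vtx σ s :=
        Vtx_eq_of_eq_add (z := 1) (by rw [h]; push_cast; ring)
      have := hord _ hn' _ (by omega) hV
      omega
    -- When `s + 2 = n`, distinctness does not cover the index `n`, but `V_n = V_0`.
    · obtain rfl : n = s + 2 := by omega
      have hV : Vtx σ s = Vtx σ 0 :=
        Vtx_eq_of_eq_add (z := w - 1) (by push_cast; linarith)
      have := hord _ (by omega) _ (by omega) hV
      omega
  refine ⟨s + 1, by omega, 0, by omega, s, by omega, 1, 1, Or.inl ⟨⟨?_, ?_⟩, ⟨?_, ?_⟩⟩⟩ <;>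
    push_cast <;> linarith
end

section
/- Suppose the polygon P is ordinary and pattern (P2) holds: there is m ∈ {2,…,n−2} with θ_0 < 0; θ_1 > 0, …, θ_m > 0; and θ_{m+1} < 0. Then there exist i, j, k ∈ {0,…,n−1} and integers p, q such that either σ(j) + 2πp ∈ (σ(i), σ(i+1)) and σ(k) + 2πq ∈ (σ(i+1), σ(i) + 2π), or σ(j) + 2πp ∈ (σ(i+1), σ(i)) and σ(k) + 2πq ∈ (σ(i), σ(i+1) + 2π). -/
open Real Set

/-!
Suppose no edge has vertices strictly on both sides. On a positive edge `1` or `m`, the vertex one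
step further along the positive run (`V_3`, resp. `V_{m-1}`) lies outside the short arc, because two
consecutive angles add up to less than `2π` when the vertices are distinct; hence the short arcs
over these two edges contain no vertex. The backward edges `0` and `m+1` share an endpoint with
them and turn back, so they must overshoot: `V_2` lies inside the short arc of edge `0`, and `V_m`
inside that of edge `m+1`. By assumption all vertices then lie in each of these two short (closed)
arcs. As `V_{m+1}` differs from `V_0` and `V_1`, the short arc of edge `m+1` sits inside that of edge
`0` and misses its endpoint `V_0`, a contradiction.
-/

/-- In an ordinary polygon, vertices with angles congruent modulo `2π` have the same index. -/
lemma Ordinary.eq_of_angle_eq {n : ℕ} {σ : ℕ → ℝ} (hord : Ordinary n σ) {i j : ℕ}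
    (hi : i < n) (hj : j < n) (p : ℤ) (h : σ i = σ j + 2 * π * p) : i = j := by
  apply hord i hi j hj
  have h' : σ i = σ j + p * (2 * π) := by rw [h]; ring
  simp only [Vtx, h', Real.cos_add_int_mul_two_pi, Real.sin_add_int_mul_two_pi]

theorem pattern_P2_implies_crossing
    (n : ℕ) (hn : 3 ≤ n) (σ : ℕ → ℝ) (hσ0 : σ 0 = 0)
    (hθ : ∀ i < n, σ (i + 1) - σ i ∈ Set.Ioc (-π) π)
    (w : ℤ) (hw : σ n = 2 * π * w)
    (hord : Ordinary n σ)
    (m : ℕ) (hm2 : 2 ≤ m) (hmn : m ≤ n - 2)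
    (h0 : σ (0 + 1) - σ 0 < 0)
    (hmid : ∀ i, 1 ≤ i → i ≤ m → 0 < σ (i + 1) - σ i)
    (hm1 : σ (m + 1 + 1) - σ (m + 1) < 0) :
    ∃ i < n, ∃ j < n, ∃ k < n, ∃ p q : ℤ,
      (σ j + 2 * π * p ∈ Set.Ioo (σ i) (σ (i + 1)) ∧
        σ k + 2 * π * q ∈ Set.Ioo (σ (i + 1)) (σ i + 2 * π)) ∨
      (σ j + 2 * π * p ∈ Set.Ioo (σ (i + 1)) (σ i) ∧
        σ k + 2 * π * q ∈ Set.Ioo (σ i) (σ (i + 1) + 2 * π)) := by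
  have hπ := Real.pi_pos
  by_contra H
  -- An edge having a vertex on one side has none on the other, in both orientations.
  have Hpos : ∀ i < n, ∀ k < n, ∀ q : ℤ, σ k + 2 * π * q ∈ Set.Ioo (σ (i + 1)) (σ i + 2 * π) →
      ∀ j < n, ∀ p : ℤ, σ j + 2 * π * p ∉ Set.Ioo (σ i) (σ (i + 1)) :=
    fun i hi k hk q hq j hj p hp => H ⟨i, hi, j, hj, k, hk, p, q, Or.inl ⟨hp, hq⟩⟩
  have Hneg : ∀ i < n, ∀ j < n, ∀ p : ℤ, σ j + 2 * π * p ∈ Set.Ioo (σ (i + 1)) (σ i) →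
      ∀ k < n, ∀ q : ℤ, σ k + 2 * π * q ∉ Set.Ioo (σ i) (σ (i + 1) + 2 * π) :=
    fun i hi j hj p hp k hk q hq => H ⟨i, hi, j, hj, k, hk, p, q, Or.inr ⟨hp, hq⟩⟩
  simp only [Set.mem_Ioo, Set.mem_Ioc, zero_add] at Hpos Hneg hθ h0
  have hθ0 := hθ 0 (by omega)
  have hθ1 := hθ 1 (by omega)
  have hθ2 := hθ 2 (by omega)
  have hθm := hθ m (by omega)
  have hθm' := hθ (m - 1) (by omega)
  have hθm1 := hθ (m + 1) (by omega)
  rw [Nat.sub_add_cancel (by omega : 1 ≤ m)] at hθm'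
  have hpos1 := hmid 1 le_rfl (by omega)
  have hpos2 := hmid 2 (by omega) hm2
  have hposm := hmid m (by omega) le_rfl
  have hposm' : 0 < σ m - σ (m - 1) := by
    have h := hmid (m - 1) (by omega) (by omega)
    rwa [Nat.sub_add_cancel (by omega : 1 ≤ m)] at h
  norm_num at hθ0 hθ1 hθ2 hpos1 hpos2
  -- `V_{m+2}` is a vertex with index `e < n`, where `e = 0` if `m + 2 = n`.
  obtain ⟨e, he, r, her, hem⟩ : ∃ e < n, ∃ r : ℤ, σ (m + 1 + 1) = σ e + 2 * π * r ∧ e ≠ m := by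
    by_cases h : m + 2 < n
    · exact ⟨m + 2, h, 0, by simp, by omega⟩
    · obtain rfl : n = m + 1 + 1 := by omega
      exact ⟨0, by omega, w, by rw [hw, hσ0]; simp, by omega⟩
  have h31 : σ 3 ≠ σ 1 + 2 * π := fun h =>
    absurd (hord.eq_of_angle_eq (i := 3) (j := 1) (by omega) (by omega) 1 (by simpa using h))
      (by norm_num)
  have h20 : σ 2 ≠ σ 0 := fun h =>
    absurd (hord.eq_of_angle_eq (i := 2) (j := 0) (by omega) (by omega) 0 (by simpa using h))
      (by norm_num)
  -- The short arc of edge `1` is empty since `V_3` is beyond it,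
  -- so `V_2` lies inside that of edge `0`.
  have hlt3 : σ 3 < σ 1 + 2 * π := lt_of_le_of_ne (by linarith) h31
  have hE1 := Hpos 1 (by omega) 3 (by omega) 0 (by norm_num; constructor <;> linarith)
    0 (by omega) 0
  have hlt2 : σ 2 < σ 0 := by
    refine lt_of_le_of_ne (not_lt.1 fun h => hE1 ?_) h20
    norm_num
    constructor <;> linarith
  have hE0 := Hneg 0 (by omega) 2 (by omega) 0 (by norm_num; constructor <;> linarith)
  -- In the same way `V_{m-1}` empties the short arc of edge `m`, and `V_m` is inside that of `m+1`.
  have hmm : σ (m + 1) ≠ σ (m - 1) + 2 * π := fun h =>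
    absurd (hord.eq_of_angle_eq (i := m + 1) (j := m - 1) (by omega) (by omega) 1 (by simpa using h))
      (by omega)
  have hltm : σ (m + 1) < σ (m - 1) + 2 * π := lt_of_le_of_ne (by linarith) hmm
  have hEm := Hpos m (by omega) (m - 1) (by omega) 1 (by norm_num; constructor <;> linarith)
    e he r
  rw [← her] at hEm
  have hltm2 : σ (m + 1 + 1) < σ m := by
    refine lt_of_le_of_ne (not_lt.1 fun h => hEm ⟨h, by linarith⟩) fun h => hem ?_
    exact (hord.eq_of_angle_eq (by omega) he r (h.symm.trans her)).symm
  have hEm1 := Hneg (m + 1) (by omega) m (by omega) 0 (by norm_num; constructor <;> linarith)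
  -- Lift the angle of `V_{m+1}` to `[σ 1, σ 1 + 2π)`; it then lies in the short arc of edge `0`.
  obtain ⟨p, ⟨hp1, hp2⟩, -⟩ := existsUnique_add_zsmul_mem_Ico Real.two_pi_pos (σ (m + 1)) (σ 1)
  have hsm : p • (2 * π) = 2 * π * p := by rw [zsmul_eq_mul]; ring
  rw [hsm] at hp1 hp2
  have hp0 : σ (m + 1) + 2 * π * p < σ 0 := by
    refine lt_of_le_of_ne (not_lt.1 fun h => ?_) fun h => ?_
    · exact hE0 (m + 1) (by omega) p ⟨h, by simpa using hp2⟩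
    · exact absurd (hord.eq_of_angle_eq (by omega) (by omega) p h.symm) (by omega : 0 ≠ m + 1)
  -- The corresponding lift of `V_{m+2}` cannot drop below `σ 1`.
  have hb : σ 1 ≤ σ (m + 1 + 1) + 2 * π * p := by
    by_contra! h
    refine hE0 e he (r + p + 1) ?_
    push_cast
    constructor <;> linarith
  refine hEm1 0 (by omega) (-p) ?_
  push_cast
  constructor <;> linarith
end

section
/- Suppose n ≥ 4, the polygon P is ordinary, and pattern (P3) holds: θ_0 < 0, θ_1 > 0, θ_2 < 0, and θ_3 > 0. Then there exist i, j, k ∈ {0,…,n−1} and integers p, q such that either σ(j) + 2πp ∈ (σ(i), σ(i+1)) and σ(k) + 2πq ∈ (σ(i+1), σ(i) + 2π), or σ(j) + 2πp ∈ (σ(i+1), σ(i)) and σ(k) + 2πq ∈ (σ(i), σ(i+1) + 2π). -/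
open Real Set

/-!
Write `a`, `b`, `c`, `d` for `σ 1`, `σ 2`, `σ 3`, `σ 4`. An edge is crossed as soon as some vertex
lies strictly inside its short arc and another strictly inside the complementary arc, and one of
the edges `0`, `1`, `2` is always crossed this way.

If all of them were uncrossed, `V 0, V 1, V 2, V 3` would appear on the circle in this cyclic order,
clockwise or counterclockwise. Counterclockwise is impossible, since `θ 0, θ 2 < 0` would produce
two gaps larger than `π`. In the clockwise order `θ 1 > 0` makes the gap from `V 1` to `V 2` at
least `π`, so every other gap is smaller than `π`; then `V 4`, a positive turn of at most `π` away
from `V 3`, falls outside the gap between `V 3` and `V 0`, and edge `1` or edge `2` is crossed. The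
proof runs through the possible positions of `b`, `c`, `d` explicitly: since `σ 0 = 0`, the
hypotheses confine `a` to `(-π, 0)`, `b` to `(a, a + π]`, `c` to `(b - π, b)` and `d` to
`(c, c + π]`, so shifts of `V 0`, …, `V 3` by at most one turn suffice.
-/

theorem pattern_P3_implies_crossing
    (n : ℕ) (hn : 4 ≤ n) (σ : ℕ → ℝ) (hσ0 : σ 0 = 0)
    (hθ : ∀ i < n, σ (i + 1) - σ i ∈ Set.Ioc (-π) π)
    (w : ℤ) (hw : σ n = 2 * π * w)
    (hord : Ordinary n σ)
    (h0 : σ 1 - σ 0 < 0) (h1 : 0 < σ 2 - σ 1)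
    (h2 : σ 3 - σ 2 < 0) (h3 : 0 < σ 4 - σ 3) :
    ∃ i < n, ∃ j < n, ∃ k < n, ∃ p q : ℤ,
      (σ j + 2 * π * p ∈ Set.Ioo (σ i) (σ (i + 1)) ∧
        σ k + 2 * π * q ∈ Set.Ioo (σ (i + 1)) (σ i + 2 * π)) ∨
      (σ j + 2 * π * p ∈ Set.Ioo (σ (i + 1)) (σ i) ∧
        σ k + 2 * π * q ∈ Set.Ioo (σ i) (σ (i + 1) + 2 * π)) := by
  have hpi := Real.pi_pos
  have t0 := hθ 0 (by omega)
  have t1 := hθ 1 (by omega)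
  have t2 := hθ 2 (by omega)
  have t3 := hθ 3 (by omega)
  norm_num [Set.mem_Ioc] at t0 t1 t2 t3
  have hne : ∀ i < n, ∀ j < n, i ≠ j → σ i ≠ σ j := fun i hi j hj hij h =>
    hij (hord i hi j hj (by simp [Vtx, h]))
  have h20 := hne 2 (by omega) 0 (by omega) (by norm_num)
  have h30 := hne 3 (by omega) 0 (by omega) (by norm_num)
  have h31 := hne 3 (by omega) 1 (by omega) (by norm_num)
  -- For `n = 4` the index `4` is out of range and `V 4` is the vertex `V 0`, shifted by `w` turns.
  obtain ⟨m, hm, r, hr, hm2⟩ : ∃ m < n, ∃ r : ℤ, σ m + 2 * π * r = σ 4 ∧ m ≠ 2 := by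
    rcases Nat.lt_or_ge 4 n with h | h
    · exact ⟨4, h, 0, by simp, by norm_num⟩
    · obtain rfl : n = 4 := by omega
      exact ⟨0, by norm_num, w, by rw [hσ0, hw]; ring, by norm_num⟩
  have h42 : σ 4 ≠ σ 2 := by
    intro h
    refine hm2 (hord m hm 2 (by omega) ?_)
    have e : σ m = σ 2 - r * (2 * π) := by linarith
    simp [Vtx, e, Real.cos_sub_int_mul_two_pi, Real.sin_sub_int_mul_two_pi]
  rw [hσ0] at h20 h30
  rcases lt_or_gt_of_ne h20 with hb | hb
  · rcases lt_or_gt_of_ne h31 with hc | hc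
    · -- `V 2` lies in the short arc of edge `0`, and `V 3` outside it.
      refine ⟨0, by omega, 2, by omega, 3, by omega, 0, 1, Or.inr ?_⟩
      norm_num [Set.mem_Ioo, hσ0]
      refine ⟨⟨?_, ?_⟩, ?_, ?_⟩ <;> linarith
    · -- `V 3` lies in the short arc of edge `1`, and `V 0` outside it.
      refine ⟨1, by omega, 3, by omega, 0, by omega, 0, 0, Or.inl ?_⟩
      norm_num [Set.mem_Ioo, hσ0]
      refine ⟨⟨?_, ?_⟩, ?_, ?_⟩ <;> linarith
  · rcases lt_or_gt_of_ne h31 with hc | hc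
    · -- `V 0` lies in the short arc of edge `1`, and `V 3` outside it.
      refine ⟨1, by omega, 0, by omega, 3, by omega, 0, 1, Or.inl ?_⟩
      norm_num [Set.mem_Ioo, hσ0]
      refine ⟨⟨?_, ?_⟩, ?_, ?_⟩ <;> linarith
    rcases lt_or_gt_of_ne h30 with hc0 | hc0
    · -- `V 3` lies in the short arc of edge `0`, and `V 2` outside it.
      refine ⟨0, by omega, 3, by omega, 2, by omega, 0, 0, Or.inr ?_⟩
      norm_num [Set.mem_Ioo, hσ0]
      refine ⟨⟨?_, ?_⟩, ?_, ?_⟩ <;> linarith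
    -- Here `a < 0 < c < b`: the clockwise order, where the position of `V 4` decides.
    rcases lt_or_gt_of_ne h42 with hd | hd
    · refine ⟨2, by omega, m, hm, 0, by omega, r, 1, Or.inr ?_⟩
      rw [hr]
      norm_num [Set.mem_Ioo, hσ0]
      refine ⟨⟨?_, ?_⟩, ?_, ?_⟩ <;> linarith
    · refine ⟨1, by omega, 0, by omega, m, hm, 0, r, Or.inl ?_⟩
      rw [hr]
      norm_num [Set.mem_Ioo, hσ0]
      refine ⟨⟨?_, ?_⟩, ?_, ?_⟩ <;> linarith
end

section
/- Let P = (V_0,…,V_{n−1}) be an ordinary cyclic polygon as in the setup. Then P is convex if and only if P is strictly to-one-side, i.e., for every i ∈ {0,…,n−1} the set of vertices {V_j : j ∈ {0,…,n−1} \ {i, i⊕1}} is strictly to one side of the edge [V_i, V_{i⊕1}]. -/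
/-!
Write `V_j = Vtx σ j` and let `K` be the convex hull of the vertices. Everything rests on two facts:
a line meets the unit circle in at most two points (`unit_circle_line`), and a convex set with
nonempty interior has a supporting line at each frontier point (`exists_support`); `K` has nonempty
interior because three distinct points of the circle are not collinear.

If the polygon is convex, the midpoint of an edge `[V_i, V_{i+1}]` lies on the frontier of `K`. A
supporting line there contains both endpoints, since a linear function that is minimal at a midpoint
agrees at the two ends. It contains no third vertex, so the remaining vertices are strictly on one
side.

Conversely, if all vertices other than its endpoints are strictly to one side of each edge, the edge
lines are supporting lines, so edges lie on the frontier. For `x` on the frontier, take a supporting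
line at `x`; it contains some vertex `V_j`. Let `u`, `v` be the edge vectors from `V_j` to its
successor and its predecessor. The one-sidedness of these two edges says that every other vertex is
`V_j + α u + β v` with `α, β > 0` (`cone_coords`). Hence the supporting line contains at most one
further vertex, and that one is a neighbour of `V_j`; so `x`, which lies in the convex hull of the
vertices on the line, lies on an edge (`convexHull_subset_union_face`).
-/

open Real Set

lemma unit_circle_line {p q r : ℝ × ℝ} (hp : p.1 ^ 2 + p.2 ^ 2 = 1) (hq : q.1 ^ 2 + q.2 ^ 2 = 1)
    (hr : r.1 ^ 2 + r.2 ^ 2 = 1) (hpq : p ≠ q) (hpr : p ≠ r) (hqr : q ≠ r) {a b c : ℝ}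
    (h1 : a * p.1 + b * p.2 = c) (h2 : a * q.1 + b * q.2 = c) (h3 : a * r.1 + b * r.2 = c) :
    a = 0 ∧ b = 0 := by
  obtain ⟨p1, p2⟩ := p
  obtain ⟨q1, q2⟩ := q
  obtain ⟨r1, r2⟩ := r
  simp only [ne_eq, Prod.mk.injEq] at *
  obtain ⟨u1, rfl⟩ : ∃ u, q1 = p1 + u := ⟨q1 - p1, by ring⟩
  obtain ⟨u2, rfl⟩ : ∃ u, q2 = p2 + u := ⟨q2 - p2, by ring⟩
  obtain ⟨v1, rfl⟩ : ∃ u, r1 = p1 + u := ⟨r1 - p1, by ring⟩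
  obtain ⟨v2, rfl⟩ : ∃ u, r2 = p2 + u := ⟨r2 - p2, by ring⟩
  have hD : u1 * v2 - u2 * v1 ≠ 0 := by
    intro hD
    have hu : 2 * (p1 * u1 + p2 * u2) + (u1 ^ 2 + u2 ^ 2) = 0 := by linarith
    have hv : 2 * (p1 * v1 + p2 * v2) + (v1 ^ 2 + v2 ^ 2) = 0 := by linarith
    have hup : 0 < u1 ^ 2 + u2 ^ 2 := by
      by_contra h
      exact hpq ⟨by nlinarith [sq_nonneg u1, sq_nonneg u2], by nlinarith [sq_nonneg u1, sq_nonneg u2]⟩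
    have hvp : 0 < v1 ^ 2 + v2 ^ 2 := by
      by_contra h
      exact hpr ⟨by nlinarith [sq_nonneg v1, sq_nonneg v2], by nlinarith [sq_nonneg v1, sq_nonneg v2]⟩
    -- Parallel chords `u`, `v` from `p` satisfy `|u|² v = |v|² u`.
    have e1 : v1 * (u1 ^ 2 + u2 ^ 2) = u1 * (v1 ^ 2 + v2 ^ 2) := by
      linear_combination v1 * hu - u1 * hv + 2 * p2 * hD
    have e2 : v2 * (u1 ^ 2 + u2 ^ 2) = u2 * (v1 ^ 2 + v2 ^ 2) := by
      linear_combination v2 * hu - u2 * hv - 2 * p1 * hD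
    have e3 : (v1 ^ 2 + v2 ^ 2) * (u1 ^ 2 + u2 ^ 2) * ((u1 ^ 2 + u2 ^ 2) - (v1 ^ 2 + v2 ^ 2)) = 0 := by
      linear_combination (v1 * (u1 ^ 2 + u2 ^ 2) + u1 * (v1 ^ 2 + v2 ^ 2)) * e1
        + (v2 * (u1 ^ 2 + u2 ^ 2) + u2 * (v1 ^ 2 + v2 ^ 2)) * e2
    have e4 : u1 ^ 2 + u2 ^ 2 = v1 ^ 2 + v2 ^ 2 := by
      have := (mul_eq_zero.1 e3).resolve_left (by positivity)
      linarith
    rw [← e4] at e1 e2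
    have f1 := mul_right_cancel₀ hup.ne' e1
    have f2 := mul_right_cancel₀ hup.ne' e2
    exact hqr ⟨by rw [f1], by rw [f2]⟩
  have ku : a * u1 + b * u2 = 0 := by linarith
  have kv : a * v1 + b * v2 = 0 := by linarith
  constructor
  · apply (mul_eq_zero.1 (_ : a * (u1 * v2 - u2 * v1) = 0)).resolve_right hD
    linear_combination v2 * ku - u2 * kv
  · apply (mul_eq_zero.1 (_ : b * (u1 * v2 - u2 * v1) = 0)).resolve_right hD
    linear_combination u1 * kv - v1 * ku

lemma convex_halfspace (a b c : ℝ) : Convex ℝ {y : ℝ × ℝ | c ≤ a * y.1 + b * y.2} := by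
  intro x hx y hy s t hs ht hst
  simp only [mem_ofPred_eq, Prod.fst_add, Prod.snd_add, Prod.smul_fst, Prod.smul_snd,
    smul_eq_mul] at *
  obtain rfl : t = 1 - s := by linarith
  nlinarith

/-- Supporting line at a frontier point, in coordinates. -/
lemma exists_support_s10 {K : Set (ℝ × ℝ)} (hK : Convex ℝ K) (hi : (interior K).Nonempty)
    {x : ℝ × ℝ} (hx : x ∈ frontier K) :
    ∃ a b : ℝ, ¬ (a = 0 ∧ b = 0) ∧ ∀ y ∈ K, a * x.1 + b * x.2 ≤ a * y.1 + b * y.2 := by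
  obtain ⟨f, hf⟩ := geometric_hahn_banach_point_open hK.interior isOpen_interior hx.2
  have key : ∀ y : ℝ × ℝ, f y = f (1, 0) * y.1 + f (0, 1) * y.2 := by
    intro y
    have : y = y.1 • ((1, 0) : ℝ × ℝ) + y.2 • ((0, 1) : ℝ × ℝ) := by ext <;> simp
    conv_lhs => rw [this]
    rw [map_add, map_smul, map_smul, smul_eq_mul, smul_eq_mul]
    ring
  refine ⟨f (1, 0), f (0, 1), ?_, ?_⟩
  · rintro ⟨h1, h2⟩
    obtain ⟨y, hy⟩ := hi
    have := hf y hy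
    rw [key x, key y, h1, h2] at this
    simp at this
  · intro y hy
    rw [← key, ← key]
    have hcl : y ∈ closure (interior K) := by
      rw [hK.closure_interior_eq_closure_of_nonempty_interior hi]
      exact subset_closure hy
    have hsub : closure (interior K) ⊆ {y | f x ≤ f y} :=
      closure_minimal (fun z hz => (hf z hz).le) (isClosed_le continuous_const f.continuous)
    exact hsub hcl

lemma mem_frontier_of_support {K : Set (ℝ × ℝ)} {x : ℝ × ℝ} (hx : x ∈ K) {a b : ℝ}
    (hab : ¬ (a = 0 ∧ b = 0)) (h : ∀ y ∈ K, a * x.1 + b * x.2 ≤ a * y.1 + b * y.2) :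
    x ∈ frontier K := by
  refine ⟨subset_closure hx, fun hint => ?_⟩
  have hc : Filter.Tendsto (fun t : ℝ => x - t • ((a, b) : ℝ × ℝ)) (nhdsWithin 0 (Ioi 0))
      (nhds x) := by
    have : Continuous (fun t : ℝ => x - t • ((a, b) : ℝ × ℝ)) := by fun_prop
    have h0 := this.tendsto 0
    simp only [zero_smul, sub_zero] at h0
    exact h0.mono_left nhdsWithin_le_nhds
  obtain ⟨t, ht, ht0⟩ := ((hc.eventually (mem_interior_iff_mem_nhds.1 hint)).and
    self_mem_nhdsWithin).exists
  have := h _ ht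
  simp only [Prod.fst_sub, Prod.snd_sub, Prod.smul_fst, Prod.smul_snd, smul_eq_mul] at this
  have hpos : 0 < a ^ 2 + b ^ 2 := by
    by_contra hn
    exact hab ⟨by nlinarith [sq_nonneg a, sq_nonneg b], by nlinarith [sq_nonneg a, sq_nonneg b]⟩
  have : 0 < t * (a ^ 2 + b ^ 2) := mul_pos ht0 hpos
  nlinarith

/-- Where a linear function attains its minimum `c` on a convex hull, only the generators attaining
`c` matter. -/
lemma convexHull_subset_union_face {S G : Set (ℝ × ℝ)} (hG : Convex ℝ G) {a b c : ℝ}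
    (hGc : ∀ y ∈ G, a * y.1 + b * y.2 = c) (hS : ∀ y ∈ S, c < a * y.1 + b * y.2 ∨ y ∈ G) :
    ∀ y ∈ convexHull ℝ S, c < a * y.1 + b * y.2 ∨ y ∈ G := by
  have hconv : Convex ℝ {y : ℝ × ℝ | c < a * y.1 + b * y.2 ∨ y ∈ G} := by
    refine convex_iff_forall_pos.2 ?_
    intro x hx y hy s t hs ht hst
    by_cases hxy : x ∈ G ∧ y ∈ G
    · exact Or.inr (hG hxy.1 hxy.2 hs.le ht.le hst)
    left
    have hx' : c ≤ a * x.1 + b * x.2 := hx.elim le_of_lt fun h => (hGc x h).ge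
    have hy' : c ≤ a * y.1 + b * y.2 := hy.elim le_of_lt fun h => (hGc y h).ge
    have hlt : c < a * x.1 + b * x.2 ∨ c < a * y.1 + b * y.2 := by
      rcases hx with h | h
      · exact Or.inl h
      · rcases hy with h' | h'
        · exact Or.inr h'
        · exact absurd ⟨h, h'⟩ hxy
    simp only [Prod.fst_add, Prod.snd_add, Prod.smul_fst, Prod.smul_snd, smul_eq_mul]
    obtain rfl : t = 1 - s := by linarith
    rcases hlt with h | h
    · nlinarith [mul_pos hs (sub_pos.2 h), mul_nonneg ht.le (sub_nonneg.2 hy')]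
    · nlinarith [mul_pos ht (sub_pos.2 h), mul_nonneg hs.le (sub_nonneg.2 hx')]
  exact fun y hy => convexHull_min (fun z hz => hS z hz) hconv hy

/-- If the linear form `(a, b)` vanishes on `u` and is positive on `v` and `y`, and `(a', b')`
vanishes on `v` and is positive on `u` and `y`, then `y` lies in the open cone spanned by `u`
and `v`. -/
lemma cone_coords {u1 u2 v1 v2 y1 y2 a b a' b' : ℝ}
    (hu : a * u1 + b * u2 = 0) (hv : 0 < a * v1 + b * v2) (hy : 0 < a * y1 + b * y2)
    (hv' : a' * v1 + b' * v2 = 0) (hu' : 0 < a' * u1 + b' * u2) (hy' : 0 < a' * y1 + b' * y2) :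
    ∃ α β : ℝ, 0 < α ∧ 0 < β ∧ y1 = α * u1 + β * v1 ∧ y2 = α * u2 + β * v2 := by
  have hD : a * b' - b * a' ≠ 0 := by
    intro hD
    have hprod : (a * v1 + b * v2) * (a' * u1 + b' * u2) = 0 := by
      linear_combination (a' * v1 + b' * v2) * hu + (u2 * v1 - u1 * v2) * hD
    exact (mul_pos hv hu').ne' hprod
  refine ⟨(a' * y1 + b' * y2) / (a' * u1 + b' * u2), (a * y1 + b * y2) / (a * v1 + b * v2),
    by positivity, by positivity, ?_⟩
  set α := (a' * y1 + b' * y2) / (a' * u1 + b' * u2) with hα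
  set β := (a * y1 + b * y2) / (a * v1 + b * v2) with hβ
  have h1 : α * (a' * u1 + b' * u2) = a' * y1 + b' * y2 := div_mul_cancel₀ _ hu'.ne'
  have h2 : β * (a * v1 + b * v2) = a * y1 + b * y2 := div_mul_cancel₀ _ hv.ne'
  constructor
  · apply mul_left_cancel₀ hD
    linear_combination b * h1 - b' * h2 - α * b' * hu + β * b * hv'
  · apply mul_left_cancel₀ hD
    linear_combination -a * h1 + a' * h2 + α * a' * hu - β * a * hv'

lemma interior_convexHull_nonempty_of_unit {S : Set (ℝ × ℝ)} {p q r : ℝ × ℝ}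
    (hpS : p ∈ S) (hqS : q ∈ S) (hrS : r ∈ S)
    (hp : p.1 ^ 2 + p.2 ^ 2 = 1) (hq : q.1 ^ 2 + q.2 ^ 2 = 1)
    (hr : r.1 ^ 2 + r.2 ^ 2 = 1) (hpq : p ≠ q) (hpr : p ≠ r) (hqr : q ≠ r) :
    (interior (convexHull ℝ S)).Nonempty := by
  rw [interior_convexHull_nonempty_iff_affineSpan_eq_top,
    AffineSubspace.affineSpan_eq_top_iff_vectorSpan_eq_top_of_nonempty ℝ _ _ ⟨p, hpS⟩, eq_top_iff]
  have hD : (q.1 - p.1) * (r.2 - p.2) - (q.2 - p.2) * (r.1 - p.1) ≠ 0 := by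
    intro hD
    -- If the determinant vanishes, the line through `p` and `q` passes through `r` as well.
    have := unit_circle_line hp hq hr hpq hpr hqr (a := q.2 - p.2) (b := -(q.1 - p.1)) rfl
      (by ring) (by linear_combination -hD)
    exact hpq (Prod.ext (by linarith [this.2]) (by linarith [this.1]))
  intro y _
  have h1 := vsub_mem_vectorSpan ℝ hqS hpS
  have h2 := vsub_mem_vectorSpan ℝ hrS hpS
  -- Cramer's rule in the basis `q - p`, `r - p`.
  have hy : y = ((y.1 * (r.2 - p.2) - y.2 * (r.1 - p.1)) /
        ((q.1 - p.1) * (r.2 - p.2) - (q.2 - p.2) * (r.1 - p.1))) • (q -ᵥ p) +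
      (((q.1 - p.1) * y.2 - (q.2 - p.2) * y.1) /
        ((q.1 - p.1) * (r.2 - p.2) - (q.2 - p.2) * (r.1 - p.1))) • (r -ᵥ p) := by
    ext
    · simp only [vsub_eq_sub, Prod.fst_add, Prod.smul_fst, Prod.fst_sub, smul_eq_mul]
      rw [div_mul_eq_mul_div, div_mul_eq_mul_div, ← add_div, eq_div_iff hD]
      ring
    · simp only [vsub_eq_sub, Prod.snd_add, Prod.smul_snd, Prod.snd_sub, smul_eq_mul]
      rw [div_mul_eq_mul_div, div_mul_eq_mul_div, ← add_div, eq_div_iff hD]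
      ring
  rw [hy]
  exact Submodule.add_mem _ (Submodule.smul_mem _ _ h1) (Submodule.smul_mem _ _ h2)

lemma oplus_lt {n i : ℕ} (hn : 3 ≤ n) : oplus n i < n := by
  unfold oplus; split_ifs <;> omega

lemma oplus_ne {n i : ℕ} (hn : 3 ≤ n) : oplus n i ≠ i := by
  unfold oplus; split_ifs <;> omega

lemma exists_pred {n j : ℕ} (hn : 3 ≤ n) (hj : j < n) :
    ∃ i < n, oplus n i = j ∧ i ≠ j ∧ i ≠ oplus n j := by
  rcases Nat.eq_zero_or_pos j with rfl | h
  · refine ⟨n - 1, by omega, ?_, by omega, ?_⟩ <;> unfold oplus <;> split_ifs <;> omega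
  · refine ⟨j - 1, by omega, ?_, by omega, ?_⟩ <;> unfold oplus <;> split_ifs <;> omega

lemma Vtx_unit (σ : ℕ → ℝ) (i : ℕ) : (Vtx σ i).1 ^ 2 + (Vtx σ i).2 ^ 2 = 1 :=
  Real.cos_sq_add_sin_sq _

theorem convex_iff_strictly_to_one_side
    (n : ℕ) (hn : 3 ≤ n) (σ : ℕ → ℝ) (hσ0 : σ 0 = 0)
    (hθ : ∀ i < n, σ (i + 1) - σ i ∈ Set.Ioc (-π) π)
    (w : ℤ) (hw : σ n = 2 * π * w)
    (hord : Ordinary n σ) :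
    IsConvexPolygon n σ ↔
      ∀ i < n, StrictlyOneSide (Vtx σ i) (Vtx σ (oplus n i))
        {Q | ∃ j, j < n ∧ j ≠ i ∧ j ≠ oplus n i ∧ Q = Vtx σ j} := by
  have hsucc : ∀ i < n, Vtx σ (i + 1) = Vtx σ (oplus n i) := by
    intro i hi
    unfold oplus
    split_ifs with h
    · rfl
    · obtain rfl : n = i + 1 := by omega
      have hper : 2 * π * (w : ℝ) = 0 + (w : ℝ) * (2 * π) := by ring
      unfold Vtx
      rw [hw, hσ0, hper, Real.cos_add_int_mul_two_pi, Real.sin_add_int_mul_two_pi]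
  have hne : ∀ i < n, ∀ j < n, i ≠ j → Vtx σ i ≠ Vtx σ j := fun i hi j hj h h' =>
    h (hord i hi j hj h')
  unfold IsConvexPolygon
  set S : Set (ℝ × ℝ) := {p | ∃ i < n, p = Vtx σ i} with hSdef
  have hVS : ∀ i < n, Vtx σ i ∈ S := fun i hi => ⟨i, hi, rfl⟩
  have hVK : ∀ i < n, Vtx σ i ∈ convexHull ℝ S := fun i hi => subset_convexHull ℝ S (hVS i hi)
  have hKconv : Convex ℝ (convexHull ℝ S) := convex_convexHull ℝ S
  have hKint : (interior (convexHull ℝ S)).Nonempty :=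
    interior_convexHull_nonempty_of_unit (hVS 0 (by omega)) (hVS 1 (by omega)) (hVS 2 (by omega))
      (Vtx_unit σ 0) (Vtx_unit σ 1) (Vtx_unit σ 2)
      (hne 0 (by omega) 1 (by omega) (by omega)) (hne 0 (by omega) 2 (by omega) (by omega))
      (hne 1 (by omega) 2 (by omega) (by omega))
  have hKclosed : IsClosed (convexHull ℝ S) := by
    have hfin : S.Finite := by
      have : S = (Vtx σ) '' (Set.Iio n) := by
        ext p
        simp only [hSdef, mem_ofPred_eq, mem_image, mem_Iio]
        constructor
        · rintro ⟨i, hi, rfl⟩; exact ⟨i, hi, rfl⟩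
        · rintro ⟨i, hi, rfl⟩; exact ⟨i, hi, rfl⟩
      rw [this]
      exact (Set.finite_Iio n).image _
    exact hfin.isClosed_convexHull ℝ
  constructor
  · intro hc i hi
    have hoi := oplus_lt (i := i) hn
    have hneq := hne i hi _ hoi (oplus_ne hn).symm
    refine ⟨hneq, ?_⟩
    have hm : midpoint ℝ (Vtx σ i) (Vtx σ (oplus n i)) ∈ frontier (convexHull ℝ S) := by
      rw [← hc, ← hsucc i hi]
      exact mem_iUnion₂.2 ⟨i, Finset.mem_range.2 hi, midpoint_mem_segment _ _⟩
    obtain ⟨a, b, hab, hsup⟩ := exists_support_s10 hKconv hKint hm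
    have h1 := hsup _ (hVK i hi)
    have h2 := hsup _ (hVK _ hoi)
    simp only [midpoint_eq_smul_add, Prod.fst_add, Prod.snd_add, Prod.smul_fst, Prod.smul_snd,
      smul_eq_mul, invOf_eq_inv] at h1 h2 hsup
    have heq : a * (Vtx σ (oplus n i)).1 + b * (Vtx σ (oplus n i)).2
        = a * (Vtx σ i).1 + b * (Vtx σ i).2 := by linarith
    refine ⟨a, b, a * (Vtx σ i).1 + b * (Vtx σ i).2, by simpa using hab, rfl, heq, ?_⟩
    rintro _ ⟨j, hj, hji, hjo, rfl⟩
    refine lt_of_le_of_ne (by linarith [hsup _ (hVK j hj)]) fun h => hab ?_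
    exact unit_circle_line (Vtx_unit σ i) (Vtx_unit σ _) (Vtx_unit σ j) hneq
      (hne i hi j hj hji.symm) (hne _ hoi j hj hjo.symm) rfl heq h.symm
  · intro hs
    apply Subset.antisymm
    · intro x hx
      obtain ⟨i, hi, hx⟩ := mem_iUnion₂.1 hx
      replace hi := Finset.mem_range.1 hi
      rw [hsucc i hi] at hx
      have hoi := oplus_lt (i := i) hn
      obtain ⟨_, a, b, c, hab, h1, h2, h3⟩ := hs i hi
      have hxc : a * x.1 + b * x.2 = c := by
        obtain ⟨s, t, _, _, hst, rfl⟩ := hx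
        simp only [Prod.fst_add, Prod.snd_add, Prod.smul_fst, Prod.smul_snd, smul_eq_mul]
        linear_combination s * h1 + t * h2 + c * hst
      refine mem_frontier_of_support (hKconv.segment_subset (hVK i hi) (hVK _ hoi) hx)
        (a := a) (b := b) (by simpa using hab) ?_
      rw [hxc]
      refine fun y hy => convexHull_min (fun z hz => ?_) (convex_halfspace a b c) hy
      obtain ⟨j, hj, rfl⟩ := hz
      by_cases hji : j = i
      · subst hji; exact h1.ge
      by_cases hjo : j = oplus n i
      · subst hjo; exact h2.ge
      exact (h3 _ ⟨j, hj, hji, hjo, rfl⟩).le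
    · intro x hx
      have hxK : x ∈ convexHull ℝ S := hKclosed.frontier_subset hx
      obtain ⟨a, b, hab, hsup⟩ := exists_support_s10 hKconv hKint hx
      set c := a * x.1 + b * x.2 with hcdef
      obtain ⟨j, hj, hjc⟩ : ∃ j < n, a * (Vtx σ j).1 + b * (Vtx σ j).2 = c := by
        by_contra! hno
        rcases convexHull_subset_union_face (S := S) (G := ∅) convex_empty (a := a) (b := b)
          (c := c) (by simp) (by
            rintro _ ⟨j, hj, rfl⟩
            exact Or.inl (lt_of_le_of_ne (hsup _ (hVK j hj)) (hno j hj).symm)) x hxK with h | h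
        · exact lt_irrefl _ h
        · exact h
      -- A segment containing all vertices on the supporting line contains `x`.
      have hseg : ∀ k < n, ∀ l < n, a * (Vtx σ k).1 + b * (Vtx σ k).2 = c →
          (∀ m < n, m ≠ k → m ≠ l → c < a * (Vtx σ m).1 + b * (Vtx σ m).2) →
          x ∈ segment ℝ (Vtx σ k) (Vtx σ l) := by
        intro k hk l hl hkc hrest
        rcases (hsup _ (hVK l hl)).eq_or_lt with hlc | hlc
        · rcases convexHull_subset_union_face (S := S) (convex_segment (Vtx σ k) (Vtx σ l))
            (a := a) (b := b) (c := c) (by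
              rintro _ ⟨s, t, _, _, hst, rfl⟩
              simp only [Prod.fst_add, Prod.snd_add, Prod.smul_fst, Prod.smul_snd, smul_eq_mul]
              linear_combination s * hkc - t * hlc + c * hst) (by
              rintro _ ⟨m, hm, rfl⟩
              by_cases hmk : m = k
              · subst hmk; exact Or.inr (left_mem_segment _ _ _)
              by_cases hml : m = l
              · subst hml; exact Or.inr (right_mem_segment _ _ _)
              exact Or.inl (hrest m hm hmk hml)) x hxK with h | h
          · exact absurd h (lt_irrefl _)
          · exact h
        · rcases convexHull_subset_union_face (S := S) (convex_singleton (Vtx σ k))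
            (a := a) (b := b) (c := c) (by rintro _ rfl; exact hkc) (by
              rintro _ ⟨m, hm, rfl⟩
              by_cases hmk : m = k
              · subst hmk; exact Or.inr rfl
              by_cases hml : m = l
              · subst hml; exact Or.inl hlc
              exact Or.inl (hrest m hm hmk hml)) x hxK with h | h
          · exact absurd h (lt_irrefl _)
          · rw [mem_singleton_iff.1 h]; exact left_mem_segment _ _ _
      obtain ⟨i, hi, hij, hinej, hio⟩ := exists_pred hn hj
      have hoj := oplus_lt (i := j) hn
      obtain ⟨_, a1, b1, c1, _, hu0, hu1, hu2⟩ := hs j hj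
      obtain ⟨_, a2, b2, c2, _, hv1, hv0, hv2⟩ := hs i hi
      rw [hij] at hv0 hv2
      have hui := hu2 _ ⟨i, hi, hinej, hio, rfl⟩
      have hvo := hv2 _ ⟨oplus n j, hoj, hio.symm, oplus_ne hn, rfl⟩
      have hfu := hsup _ (hVK _ hoj)
      have hfv := hsup _ (hVK _ hi)
      have hcone : ∀ m < n, m ≠ j → m ≠ oplus n j → m ≠ i →
          ∃ α β : ℝ, 0 < α ∧ 0 < β ∧
            a * (Vtx σ m).1 + b * (Vtx σ m).2 - c =
              α * (a * (Vtx σ (oplus n j)).1 + b * (Vtx σ (oplus n j)).2 - c) +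
              β * (a * (Vtx σ i).1 + b * (Vtx σ i).2 - c) := by
        intro m hm hmj hmo hmi
        have hum := hu2 _ ⟨m, hm, hmj, hmo, rfl⟩
        have hvm := hv2 _ ⟨m, hm, hmi, hmj, rfl⟩
        obtain ⟨α, β, hα, hβ, e1, e2⟩ := cone_coords
          (u1 := (Vtx σ (oplus n j)).1 - (Vtx σ j).1) (u2 := (Vtx σ (oplus n j)).2 - (Vtx σ j).2)
          (v1 := (Vtx σ i).1 - (Vtx σ j).1) (v2 := (Vtx σ i).2 - (Vtx σ j).2)
          (y1 := (Vtx σ m).1 - (Vtx σ j).1) (y2 := (Vtx σ m).2 - (Vtx σ j).2)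
          (a := a1) (b := b1) (a' := a2) (b' := b2)
          (by linarith) (by linarith) (by linarith) (by linarith) (by linarith) (by linarith)
        refine ⟨α, β, hα, hβ, ?_⟩
        linear_combination a * e1 + b * e2 + (1 - α - β) * hjc
      rcases hfu.eq_or_lt with hu | hu
      · -- The supporting line is the line of the edge leaving `V_j`.
        have hv : c < a * (Vtx σ i).1 + b * (Vtx σ i).2 := by
          refine lt_of_le_of_ne hfv fun h => hab ?_
          exact unit_circle_line (Vtx_unit σ j) (Vtx_unit σ (oplus n j)) (Vtx_unit σ i)
            (hne _ hj _ hoj (oplus_ne hn).symm) (hne _ hj _ hi hinej.symm)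
            (hne _ hoj _ hi hio.symm) hjc hu.symm h.symm
        refine mem_iUnion₂.2 ⟨j, Finset.mem_range.2 hj, ?_⟩
        rw [hsucc j hj]
        refine hseg j hj _ hoj hjc fun m hm hmj hmo => ?_
        by_cases hmi : m = i
        · subst hmi; exact hv
        obtain ⟨α, β, hα, hβ, e⟩ := hcone m hm hmj hmo hmi
        rw [← hu, sub_self, mul_zero, zero_add] at e
        linarith [mul_pos hβ (sub_pos.2 hv)]
      · -- Otherwise it can contain, besides `V_j`, only its predecessor.
        refine mem_iUnion₂.2 ⟨i, Finset.mem_range.2 hi, ?_⟩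
        rw [hsucc i hi, hij, segment_symm]
        refine hseg j hj i hi hjc fun m hm hmj hmi => ?_
        by_cases hmo : m = oplus n j
        · subst hmo; exact hu
        obtain ⟨α, β, hα, hβ, e⟩ := hcone m hm hmj hmo hmi
        linarith [mul_pos hα (sub_pos.2 hu), mul_nonneg hβ.le (sub_nonneg.2 hfv)]
end

section
/- Let P = (V_0,…,V_{n−1}) be an ordinary cyclic polygon as in the setup. If P is convex, then pattern (P1) does not occur: there is no m ∈ {0,…,n−1} such that θ_0 > 0, …, θ_m > 0 and θ_0 + ⋯ + θ_m > 2π. -/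
/-!
Every edge of a convex polygon lies in the frontier of the convex hull of the vertices, so no edge
can have vertices strictly on both sides of its line (`midpoint_mem_interior`).

If (P1) occurred, then `σ` would increase past `2π`: let `l + 2` be the first index with
`σ (l + 2) > 2π`. Since each central angle is at most `π` and the vertices are distinct, `l ≥ 1` and
`σ (l + 1) < 2π < σ (l + 2)`. Thus `V_0` lies strictly beyond the edge `[V_{l+1}, V_{l+2}]`, on the
open arc of length at most `π` it cuts off. The vertex `V_l`, at most `π` before `V_{l+1}`, lies
strictly on the other side unless both central angles equal `π`; in that case `V_l = V_{l+2}`,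
contradicting distinctness.
-/

open Real Set

/-- If a convex subset of the plane contains `P ≠ Q` and points strictly on both sides of the line
`PQ` (given in normal form `a x + b y = c` with `a² + b² = 1`), then the midpoint of `P` and `Q` is
interior to it: a supporting line there would have to be the line `PQ` itself. -/
lemma midpoint_mem_interior {C : Set (ℝ × ℝ)} (hC : Convex ℝ C) {P Q R S : ℝ × ℝ} {a b c : ℝ}
    (hP : P ∈ C) (hQ : Q ∈ C) (hR : R ∈ C) (hS : S ∈ C) (hPQ : P ≠ Q) (hab : a ^ 2 + b ^ 2 = 1)
    (hLP : a * P.1 + b * P.2 = c) (hLQ : a * Q.1 + b * Q.2 = c)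
    (hLR : c < a * R.1 + b * R.2) (hLS : a * S.1 + b * S.2 < c) :
    midpoint ℝ P Q ∈ interior C := by
  -- `μ` is the coordinate of `Q - P` along the unit direction `(-b, a)` of the line.
  set μ : ℝ := a * (Q.2 - P.2) - b * (Q.1 - P.1) with hμ
  have hx : Q.1 - P.1 = -b * μ := by
    linear_combination (-(Q.1 - P.1)) * hab + a * hLQ - a * hLP
  have hy : Q.2 - P.2 = a * μ := by
    linear_combination (-(Q.2 - P.2)) * hab + b * hLQ - b * hLP
  have hμ0 : μ ≠ 0 := by
    intro h
    rw [h] at hx hy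
    exact hPQ (Prod.ext (by linarith) (by linarith))
  have hne : (interior C).Nonempty := by
    rw [hC.interior_nonempty_iff_affineSpan_eq_top, eq_top_iff]
    intro X _
    have hP' : P ∈ affineSpan ℝ C := subset_affineSpan ℝ C hP
    have hQ' : Q ∈ affineSpan ℝ C := subset_affineSpan ℝ C hQ
    have hR' : R ∈ affineSpan ℝ C := subset_affineSpan ℝ C hR
    -- `X = P + t (R - P) + s (Q - P)`: `t` matches the height above the line, `s` the remainder.
    obtain ⟨t, ht⟩ : ∃ t : ℝ, t * (a * R.1 + b * R.2 - c) = a * X.1 + b * X.2 - c :=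
      ⟨_, div_mul_cancel₀ _ (by linarith)⟩
    obtain ⟨s, hs⟩ : ∃ s : ℝ, s * μ =
        a * (X.2 - P.2 - t * (R.2 - P.2)) - b * (X.1 - P.1 - t * (R.1 - P.1)) :=
      ⟨_, div_mul_cancel₀ _ hμ0⟩
    have h1 := AffineSubspace.smul_vsub_vadd_mem _ t hR' hP' hP'
    have h2 := AffineSubspace.smul_vsub_vadd_mem _ s hQ' hP' h1
    convert h2 using 1
    ext
    · simp only [vsub_eq_sub, vadd_eq_add, Prod.fst_add, Prod.smul_fst, Prod.fst_sub, smul_eq_mul]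
      linear_combination (-(X.1 - P.1 - t * (R.1 - P.1))) * hab - s * hx + b * hs - a * ht
        + (-a + a * t) * hLP
    · simp only [vsub_eq_sub, vadd_eq_add, Prod.snd_add, Prod.smul_snd, Prod.snd_sub, smul_eq_mul]
      linear_combination (-(X.2 - P.2 - t * (R.2 - P.2))) * hab - s * hy - a * hs - b * ht
        + (-b + b * t) * hLP
  by_contra hM
  obtain ⟨f, hf⟩ := geometric_hahn_banach_open_point hC.interior isOpen_interior hM
  have hle : ∀ z ∈ C, f z ≤ f (midpoint ℝ P Q) := by
    intro z hz
    have hz' : z ∈ closure (interior C) := by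
      rw [hC.closure_interior_eq_closure_of_nonempty_interior hne]
      exact subset_closure hz
    exact closure_minimal (fun y hy => (hf y hy).le)
      (isClosed_le f.continuous continuous_const) hz'
  set α := f (1, 0) with hα
  set β := f (0, 1) with hβ
  have hform : ∀ z : ℝ × ℝ, f z = α * z.1 + β * z.2 := by
    intro z
    have : z = z.1 • ((1 : ℝ), (0 : ℝ)) + z.2 • ((0 : ℝ), (1 : ℝ)) := by ext <;> simp
    conv_lhs => rw [this]
    rw [map_add, map_smul, map_smul, smul_eq_mul, smul_eq_mul]
    ring
  have hmid : f (midpoint ℝ P Q) = (f P + f Q) / 2 := by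
    rw [midpoint_eq_smul_add, map_smul, map_add, smul_eq_mul, invOf_eq_inv]
    ring
  rw [hmid] at hle
  have hfP := hle P hP
  have hfQ := hle Q hQ
  have hfR := hle R hR
  have hfS := hle S hS
  have hfPQ : f P = f Q := by linarith
  rw [← hfPQ] at hfR hfS
  simp only [hform] at hfPQ hfR hfS
  -- The normal `(α, β)` of the supporting line is parallel to `(a, b)`.
  have hpar : a * β - b * α = 0 := by
    have : (a * β - b * α) * μ = 0 := by linear_combination (-α) * hx - β * hy - hfPQ
    exact (mul_eq_zero.mp this).resolve_right hμ0
  have e1 : α = (a * α + b * β) * a := by linear_combination (-α) * hab - b * hpar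
  have e2 : β = (a * α + b * β) * b := by linear_combination (-β) * hab + a * hpar
  set r := a * α + b * β
  have hr1 : r * (a * R.1 + b * R.2 - c) ≤ 0 := by
    rw [e1, e2] at hfR
    have : r * (a * P.1 + b * P.2) = r * c := by rw [hLP]
    linarith
  have hr2 : r * (a * S.1 + b * S.2 - c) ≤ 0 := by
    rw [e1, e2] at hfS
    have : r * (a * P.1 + b * P.2) = r * c := by rw [hLP]
    linarith
  have hr0 : r = 0 := by
    apply le_antisymm <;> by_contra h <;> push Not at h <;> nlinarith
  obtain ⟨z, hz⟩ := hne
  have := hf z hz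
  rw [hform, hform, e1, e2, hr0] at this
  simp at this

theorem convex_not_pattern_P1
    (n : ℕ) (hn : 3 ≤ n) (σ : ℕ → ℝ) (hσ0 : σ 0 = 0)
    (hθ : ∀ i < n, σ (i + 1) - σ i ∈ Set.Ioc (-π) π)
    (w : ℤ) (hw : σ n = 2 * π * w)
    (hord : Ordinary n σ) (hconv : IsConvexPolygon n σ) :
    ¬ ∃ m < n, (∀ i ≤ m, 0 < σ (i + 1) - σ i) ∧
      2 * π < ∑ i ∈ Finset.range (m + 1), (σ (i + 1) - σ i) := by
  rintro ⟨m, hm, hpos, hsum⟩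
  rw [Finset.sum_range_sub, hσ0, sub_zero] at hsum
  have hπ := Real.pi_pos
  have hVn : Vtx σ n = Vtx σ 0 := by
    have h : σ n = (w : ℝ) * (2 * π) := by rw [hw]; ring
    simp only [Vtx, h, hσ0, Real.cos_int_mul_two_pi, Real.sin_zero, Real.cos_zero]
    rw [← zero_add ((w : ℝ) * (2 * π)), Real.sin_add_int_mul_two_pi, Real.sin_zero]
  have hinj : ∀ i < n, i ≠ 0 → ∀ j ≤ n, Vtx σ i = Vtx σ j → i = j := by
    intro i hi hi0 j hj h
    rcases hj.lt_or_eq with hj | rfl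
    · exact hord i hi j hj h
    · exact absurd (hord i hi 0 (by omega) (h.trans hVn)) hi0
  have hex : ∃ j, 2 * π < σ j := ⟨_, hsum⟩
  classical
  obtain ⟨j, hj, hjm, hmin⟩ : ∃ j, 2 * π < σ j ∧ j ≤ m + 1 ∧ ∀ i < j, σ i ≤ 2 * π :=
    ⟨Nat.find hex, Nat.find_spec hex, Nat.find_min' hex hsum,
      fun i hi => not_lt.mp (Nat.find_min hex hi)⟩
  have h01 := (hθ 0 (by omega)).2
  have h12 := (hθ 1 (by omega)).2
  norm_num [hσ0] at h01 h12
  obtain ⟨l, rfl, hl⟩ : ∃ l, j = l + 2 ∧ l ≠ 0 := by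
    rcases j with _ | _ | _ | l
    · rw [hσ0] at hj; linarith
    · norm_num at hj; linarith
    · norm_num at hj; linarith
    · exact ⟨l + 1, rfl, by omega⟩
  have hd := hpos l (by omega)
  have hd' := (hθ l (by omega)).2
  have hh := hpos (l + 1) (by omega)
  have hh' := (hθ (l + 1) (by omega)).2
  have hlt : σ (l + 1) < 2 * π := by
    refine lt_of_le_of_ne (hmin _ (by omega)) fun h => ?_
    have := hord (l + 1) (by omega) 0 (by omega) (by simp [Vtx, h, hσ0])
    omega
  -- Two consecutive central angles equal to `π` would give `V_l = V_{l+2}`.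
  have hstrict : σ (l + 2) - σ l < 2 * π := by
    refine lt_of_le_of_ne (by linarith) fun h => ?_
    have h' : σ (l + 2) = σ l + 2 * π := by linarith
    have := hinj l (by omega) hl (l + 2) (by omega)
      (by simp only [Vtx, h', Real.cos_add_two_pi, Real.sin_add_two_pi])
    omega
  have hne : Vtx σ (l + 1) ≠ Vtx σ (l + 2) := fun h => by
    have := hinj (l + 1) (by omega) (by omega) (l + 2) (by omega) h
    omega
  have hmem : ∀ i ≤ n, Vtx σ i ∈ convexHull ℝ {p | ∃ i < n, p = Vtx σ i} := by
    intro i hi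
    apply subset_convexHull
    rcases hi.lt_or_eq with hi | rfl
    · exact ⟨i, hi, rfl⟩
    · exact ⟨0, by omega, hVn⟩
  -- The line of the edge has unit normal at the angle `φ` bisecting its arc, of half-length `h`.
  set φ := (σ (l + 1) + σ (l + 2)) / 2 with hφ
  set h := (σ (l + 2) - σ (l + 1)) / 2 with hhdef
  have hL : ∀ i, Real.cos φ * (Vtx σ i).1 + Real.sin φ * (Vtx σ i).2 = Real.cos (φ - σ i) :=
    fun i => (Real.cos_sub _ _).symm
  have hint := midpoint_mem_interior (convex_convexHull ℝ {p | ∃ i < n, p = Vtx σ i})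
    (a := Real.cos φ) (b := Real.sin φ) (c := Real.cos h)
    (hmem (l + 1) (by omega)) (hmem (l + 2) (by omega)) (hmem 0 (by omega)) (hmem l (by omega))
    hne (Real.cos_sq_add_sin_sq φ)
    (by rw [hL]; congr 1; simp only [hφ, hhdef]; ring)
    (by rw [hL, ← Real.cos_neg]; congr 1; simp only [hφ, hhdef]; ring)
    (by
      rw [hL, hσ0, sub_zero, ← Real.cos_sub_two_pi φ, ← Real.cos_abs (φ - 2 * π)]
      have : |φ - 2 * π| < h := abs_lt.mpr ⟨by linarith, by linarith⟩
      exact Real.cos_lt_cos_of_nonneg_of_le_pi (abs_nonneg _) (by linarith) this)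
    (by
      -- `φ - σ l` lies strictly between `h` and `2π - h`.
      rw [hL]
      rcases le_total (φ - σ l) π with hc | hc
      · exact Real.cos_lt_cos_of_nonneg_of_le_pi (by linarith) hc (by linarith)
      · rw [← Real.cos_two_pi_sub (φ - σ l)]
        exact Real.cos_lt_cos_of_nonneg_of_le_pi (by linarith) (by linarith) (by linarith))
  have hfr : midpoint ℝ (Vtx σ (l + 1)) (Vtx σ (l + 2)) ∈
      frontier (convexHull ℝ {p | ∃ i < n, p = Vtx σ i}) := by
    rw [← hconv]
    exact Set.mem_biUnion (Finset.mem_coe.mpr (Finset.mem_range.mpr (by omega : l + 1 < n)))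
      (midpoint_mem_segment _ _)
  exact hfr.2 hint
end
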